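/- arXiv:2008.04754 — 4 statements merged into one kernel-verified Lean document; each statement's English description precedes it below -/
import Mathlib

section
/- Let f(x) = \sum_{k=0}^\infty a_k x^k, with a_k > 0 for all k \ge 0, be an entire function such that 2\cdot 2^{1/3} \le q_2(f) \le q_3(f) \le q_4(f) \le \cdots (the sequence of second quotients of Taylor coefficients is non-decreasing and its first term is at least 2\cdot 2^{1/3}). Then all but a finite number of zeros of f are real and simple; that is, there exists a finite set S \subset \mathbb{C} such that every zero z of f with z \notin S satisfies z \in \mathbb{R} and f'(z) \ne 0. -/
/-- The second quotients of Taylor coefficients: `q n = a_{n-1}^2 / (a_{n-2} a_n)`. -/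
noncomputable def secondQuotient (a : ℕ → ℝ) (n : ℕ) : ℝ := (a (n - 1)) ^ 2 / (a (n - 2) * a n)

open Finset Filter Topology

lemma sum_bound_aux (T : ℕ → ℝ) (m : ℕ) (hT : ∀ j, 0 < T j)
    (hr : ∀ j, m ≤ j → T (j+1) ≤ 2/3 * T j) (hl : ∀ j, j < m → T j ≤ 2/3 * T (j+1))
    (s : ℝ) (hs : HasSum T s) : s ≤ 5 * T m := by
  have h1 : ∀ i, i ≤ m → ∑ j ∈ range i, T j ≤ 2 * T i := by
    intro i
    induction i with
    | zero => intro _; simpa using (hT 0).le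
    | succ i ih =>
      intro hi
      rw [sum_range_succ]
      have := ih (by omega)
      have := hl i (by omega)
      linarith
  have h2 : ∀ i, T (i + m) ≤ (2/3 : ℝ)^i * T m := by
    intro i
    induction i with
    | zero => simp
    | succ i ih =>
      have := hr (i+m) (by omega)
      rw [show i + 1 + m = i + m + 1 by ring, pow_succ]
      linarith
  have hg : HasSum (fun i => (2/3 : ℝ)^i * T m) (3 * T m) := by
    have := (hasSum_geometric_of_lt_one (r := (2/3:ℝ)) (by norm_num) (by norm_num)).mul_right (T m)
    norm_num at this ⊢
    exact this
  have h3 : HasSum (fun i => T (i + m)) (s - ∑ j ∈ range m, T j) := by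
    rw [hasSum_nat_add_iff]; simpa using hs
  have h4 := hasSum_le h2 h3 hg
  have h5 := h1 m le_rfl
  linarith

lemma sign_aux (T : ℕ → ℝ) (p : ℕ) (hT : ∀ j, 0 < T j)
    (hr : ∀ j, p + 3 ≤ j → T (j+1) ≤ T j) (hl : ∀ j, j < p + 3 → T j ≤ T (j+1))
    (s : ℝ) (hs : HasSum (fun j => (-1)^j * T j) s) :
    T (p+3) - T (p+4) + T (p+5) - T (p+6) - T (p+2) + T (p+1) - T p ≤ (-1)^(p+3) * s ∧
    T (p+3) - T (p+4) - T (p+2) ≤ (-1)^(p+3) * s := by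
  have h1 : ∀ i, i ≤ p + 3 → -(T i) ≤ (-1)^i * ∑ j ∈ range i, (-1)^j * T j ∧
      (-1)^i * ∑ j ∈ range i, (-1)^j * T j ≤ 0 := by
    intro i
    induction i with
    | zero => intro _; simpa using (hT 0).le
    | succ i ih =>
      intro hi
      have hh := ih (by omega)
      have h3 := hl i (by omega)
      have h4 : ((-1:ℝ))^(i+1) * ∑ j ∈ range (i+1), (-1)^j * T j
          = -((-1)^i * ∑ j ∈ range i, (-1)^j * T j) - T i := by
        rw [sum_range_succ, pow_succ]
        have : ((-1:ℝ))^i * (-1)^i = 1 := by rw [← mul_pow]; simp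
        linear_combination (-T i) * this
      rw [h4]
      constructor <;> linarith
  have hsq : ((-1:ℝ))^(p+3) * (-1)^(p+3) = 1 := by rw [← mul_pow]; simp
  have hsq' : ((-1:ℝ))^p * (-1)^p = 1 := by rw [← mul_pow]; simp
  have h3 : HasSum (fun i => (-1)^i * T (i + (p+3)))
      ((-1)^(p+3) * (s - ∑ j ∈ range (p+3), (-1)^j * T j)) := by
    have h := ((hasSum_nat_add_iff (f := fun j => (-1)^j * T j) (p+3)
      (g := s - ∑ j ∈ range (p+3), (-1)^j * T j)).2 (by simpa using hs)).mul_left ((-1)^(p+3))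
    refine h.congr_fun ?_ |> fun h => h
    intro i
    rw [pow_add]
    linear_combination (-(-1)^i * T (i + (p+3))) * hsq
  have hanti : Antitone (fun i => T (i + (p+3))) := by
    apply antitone_nat_of_succ_le
    intro n
    have := hr (n + (p+3)) (by omega)
    rwa [show n + 1 + (p+3) = n + (p+3) + 1 by ring]
  generalize hG : ∑ j ∈ range (p+3), (-1)^j * T j = G at h3
  have h5 := hanti.alternating_series_le_tendsto h3.tendsto_sum_nat 2
  have h6 := hanti.alternating_series_le_tendsto h3.tendsto_sum_nat 1
  simp only [sum_range_succ, range_zero, sum_empty] at h5 h6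
  norm_num at h5 h6
  have e3 : 3 + (p+3) = p + 6 := by ring
  have e2 : 2 + (p+3) = p + 5 := by ring
  have e1 : 1 + (p+3) = p + 4 := by ring
  rw [e3, e2, e1] at h5
  rw [e1] at h6
  have h7 := (h1 (p+2) (by omega)).2
  have h8 := (h1 p (by omega)).2
  have e7 : ((-1:ℝ))^(p+3) * ∑ j ∈ range (p+3), (-1)^j * T j
          = -((-1)^(p+2) * ∑ j ∈ range (p+2), (-1)^j * T j) - T (p+2) := by
    rw [sum_range_succ]
    simp only [pow_succ]
    linear_combination (-T (p+2)) * hsq'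
  have e8 : ((-1:ℝ))^(p+2) * ∑ j ∈ range (p+2), (-1)^j * T j
          = ((-1)^p * ∑ j ∈ range p, (-1)^j * T j) + T p - T (p+1) := by
    rw [sum_range_succ, sum_range_succ]
    simp only [pow_succ]
    linear_combination (T p - T (p+1)) * hsq'
  rw [hG] at e7
  rw [mul_sub] at h5 h6
  constructor
  · linarith
  · have := (h1 (p+2) (by omega)).2
    linarith

open MeromorphicOn Metric Real in
lemma jensen_aux (f : ℂ → ℂ) (hf : Differentiable ℂ f) (h0 : f 0 ≠ 0) (X B : Finset ℂ)
    (hX : ∀ u ∈ X, f u = 0) (hB : ∀ u ∈ B, f u = 0)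
    (hXB : ∀ u ∈ X, u ∈ B → deriv f u = 0) (R M : ℝ) (hR : 0 < R) (hM : 1 ≤ M)
    (hXR : ∀ u ∈ X, ‖u‖ ≤ R) (hBR : ∀ u ∈ B, ‖u‖ ≤ R)
    (hbd : ∀ z : ℂ, ‖z‖ = R → ‖f z‖ ≤ M) :
    ∑ u ∈ X, (log R - log ‖u‖) + ∑ u ∈ B, (log R - log ‖u‖) ≤ log M - log ‖f 0‖ := by
  classical
  have hA : AnalyticOnNhd ℂ f Set.univ := fun z _ => hf.analyticAt z
  have h₁f : AnalyticOnNhd ℂ f (closedBall 0 |R|) := fun z _ => hf.analyticAt z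
  have jensen := h₁f.circleAverage_log_norm hR.ne' h0
  have ib : circleAverage (fun x ↦ Real.log ‖f x‖) 0 R ≤ Real.log M := by
    apply circleAverage_mono_on_of_le_circle
    · exact (h₁f.mono sphere_subset_closedBall).meromorphicOn.circleIntegrable_log_norm
    · intro z hz
      have hz' : ‖z‖ = R := by simpa [abs_of_pos hR] using hz
      obtain (h | h) := eq_zero_or_norm_pos (f z)
      · simpa [h] using log_nonneg hM
      · exact log_le_log h (hbd z hz')
  have hfin := (divisor f (closedBall 0 |R|)).finiteSupport (isCompact_closedBall ..)
  have hnn := h₁f.divisor_nonneg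
  have htop : ∀ u, analyticOrderAt f u ≠ ⊤ := by
    intro u
    apply AnalyticOnNhd.analyticOrderAt_ne_top_of_isPreconnected (x := 0) hA isPreconnected_univ
      (Set.mem_univ _) (Set.mem_univ _)
    rw [(hf.analyticAt 0).analyticOrderAt_eq_zero.2 h0]
    simp
  have hdiv : ∀ n : ℕ, ∀ u, ‖u‖ ≤ R → (n : ℕ∞) ≤ analyticOrderAt f u →
      (n : ℤ) ≤ divisor f (closedBall 0 |R|) u := by
    intro n u hu hn
    rw [AnalyticOnNhd.divisor_apply h₁f (by simpa [abs_of_pos hR] using hu)]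
    obtain ⟨k, hk⟩ := ENat.ne_top_iff_exists.1 (htop u)
    rw [← hk] at hn ⊢
    simpa using hn
  have hne : ∀ u, f u = 0 → u ≠ 0 := by
    rintro u hu rfl; exact h0 hu
  have hone : ∀ u, f u = 0 → ‖u‖ ≤ R → (1 : ℤ) ≤ divisor f (closedBall 0 |R|) u := by
    intro u hu hR'
    refine hdiv 1 u hR' ?_
    have := (hf.analyticAt u).analyticOrderAt_ne_zero.2 hu
    simpa [Order.one_le_iff_ne_zero] using this
  have htwo : ∀ u, f u = 0 → deriv f u = 0 → ‖u‖ ≤ R →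
      (2 : ℤ) ≤ divisor f (closedBall 0 |R|) u := by
    intro u hu hd hR'
    refine hdiv 2 u hR' ?_
    rw [natCast_le_analyticOrderAt_iff_iteratedDeriv_eq_zero (hf.analyticAt u)]
    intro i hi
    interval_cases i
    · simpa using hu
    · simpa using hd
  have hlog : ∀ u, f u = 0 → log (R * ‖0 - u‖⁻¹) = log R - log ‖u‖ := by
    intro u hu
    rw [zero_sub, norm_neg, ← div_eq_mul_inv, log_div hR.ne' (norm_ne_zero_iff.2 (hne u hu))]
  have hge : ∑ u ∈ X ∪ B, (divisor f (closedBall 0 |R|) u : ℝ) * Real.log (R * ‖0 - u‖⁻¹)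
      ≤ ∑ᶠ u, (divisor f (closedBall 0 |R|) u : ℝ) * Real.log (R * ‖0 - u‖⁻¹) := by
    rw [finsum_eq_sum_of_support_subset (s := hfin.toFinset ∪ (X ∪ B))]
    · apply sum_le_sum_of_subset_of_nonneg subset_union_right
      intro u _ _
      by_cases hu : ‖u‖ ≤ R
      · apply mul_nonneg (by exact_mod_cast hnn u)
        by_cases hu0 : u = 0
        · simp [hu0]
        · apply log_nonneg
          rw [zero_sub, norm_neg, ← div_eq_mul_inv, one_le_div (norm_pos_iff.2 hu0)]
          exact hu
      · have : divisor f (closedBall 0 |R|) u = 0 := by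
          apply Function.locallyFinsuppWithin.apply_eq_zero_of_notMem
          simpa [abs_of_pos hR] using hu
        simp [this]
    · intro u hu
      simp only [Function.mem_support] at hu
      have : (divisor f (closedBall 0 |R|)) u ≠ 0 := by
        intro h; simp [h] at hu
      simp [this]
  have hle : ∑ u ∈ X, (log R - log ‖u‖) + ∑ u ∈ B, (log R - log ‖u‖) ≤
      ∑ u ∈ X ∪ B, (divisor f (closedBall 0 |R|) u : ℝ) * Real.log (R * ‖0 - u‖⁻¹) := by
    have eX : ∑ u ∈ X, (log R - log ‖u‖) = ∑ u ∈ X ∪ B, if u ∈ X then (log R - log ‖u‖) else 0 := by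
      rw [← sum_filter]; congr 1; ext u; simp
    have eB : ∑ u ∈ B, (log R - log ‖u‖) = ∑ u ∈ X ∪ B, if u ∈ B then (log R - log ‖u‖) else 0 := by
      rw [← sum_filter]; congr 1; ext u; simp
    rw [eX, eB, ← sum_add_distrib]
    apply sum_le_sum
    intro u hu
    have hu0 : f u = 0 ∧ ‖u‖ ≤ R := by
      rcases mem_union.1 hu with h | h
      · exact ⟨hX u h, hXR u h⟩
      · exact ⟨hB u h, hBR u h⟩
    have hl0 : 0 ≤ log R - log ‖u‖ :=
      sub_nonneg.2 (log_le_log (norm_pos_iff.2 (hne u hu0.1)) hu0.2)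
    rw [hlog u hu0.1]
    have h1 : (1:ℝ) ≤ divisor f (closedBall 0 |R|) u := by exact_mod_cast hone u hu0.1 hu0.2
    by_cases h : u ∈ X <;> by_cases h' : u ∈ B
    · have h2 : (2:ℝ) ≤ divisor f (closedBall 0 |R|) u := by
        exact_mod_cast htwo u hu0.1 (hXB u h h') hu0.2
      simp only [h, h', if_true]
      nlinarith
    · simp only [h, h', if_true, if_false]; nlinarith
    · simp only [h, h', if_true, if_false]; nlinarith
    · simp only [h, h', if_false]; nlinarith
  linarith

lemma num_aux (s : ℝ) (h0 : 0 < s) (h : s ^ 6 ≤ 1/16) :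
    0 < 1 - 2*s + s^2*s^2 + s^2*s^2 - s^3*(s^2*s^2*s^2) - s^3*(s^2*s^2*s^2) := by
  have h1 : s ≤ 63/100 := by
    by_contra hc
    push Not at hc
    have : (63/100 : ℝ)^6 < s^6 := by gcongr
    norm_num at this
    linarith
  have h5 : s^5 ≤ 1/10 := by
    calc s^5 ≤ (63/100)^5 := by gcongr
      _ ≤ 1/10 := by norm_num
  have h4 : 0 < s^4 := by positivity
  have h6 : s^4 * s^5 ≤ s^4 * (1/10) := by gcongr
  have h7 : 0 < 1 - 2*s + 1.8 * s^4 := by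
    nlinarith [sq_nonneg (s^2 - 0.3969), sq_nonneg (s - 0.63)]
  nlinarith

lemma E_pos (Q : ℕ → ℝ) (hm : Monotone Q) (hQ : ∀ n, 0 < Q n) (h16 : 16 ≤ Q 0 ^ 3) :
    ∃ N, ∀ p, N ≤ p → (0 < 1 - 2 * (√(Q (p+2)))⁻¹ ∨
      0 < 1 - 2 * (√(Q (p+2)))⁻¹ + (√(Q (p+2)))⁻¹^2 * (Q (p+3))⁻¹ + (√(Q (p+2)))⁻¹^2 * (Q (p+1))⁻¹
        - (√(Q (p+2)))⁻¹^3 * ((Q (p+3))⁻¹ * (Q (p+3))⁻¹ * (Q (p+4))⁻¹)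
        - (√(Q (p+2)))⁻¹^3 * ((Q (p+1))⁻¹ * (Q (p+1))⁻¹ * (Q p)⁻¹)) := by
  by_cases hb : ∃ n, 4 < Q n
  · obtain ⟨n, hn⟩ := hb
    refine ⟨n, fun p hp => Or.inl ?_⟩
    have h1 : 4 < Q (p+2) := hn.trans_le (hm (by omega))
    have h2 : 2 < √(Q (p+2)) := by
      rw [Real.lt_sqrt (by norm_num)]; linarith
    have : (√(Q (p+2)))⁻¹ < 2⁻¹ := by gcongr
    linarith
  · push Not at hb
    have hbd : BddAbove (Set.range Q) := ⟨4, by rintro _ ⟨n, rfl⟩; exact hb n⟩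
    have hlim := tendsto_atTop_ciSup hm hbd
    set c := ⨆ i, Q i with hc
    have hc0 : Q 0 ≤ c := le_ciSup hbd 0
    have hcp : 0 < c := (hQ 0).trans_le hc0
    have hc16 : 16 ≤ c^3 := h16.trans (by have := hQ 0; gcongr)
    have hl : ∀ k, Tendsto (fun p => (Q (p+k))⁻¹) atTop (𝓝 c⁻¹) := fun k =>
      (((tendsto_add_atTop_iff_nat k).2 hlim).inv₀ hcp.ne')
    have hl0 : Tendsto (fun p => (Q p)⁻¹) atTop (𝓝 c⁻¹) := hl 0
    have hs : Tendsto (fun p => (√(Q (p+2)))⁻¹) atTop (𝓝 (√c)⁻¹) :=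
      (((tendsto_add_atTop_iff_nat 2).2 hlim).sqrt).inv₀ (Real.sqrt_pos.2 hcp).ne'
    have hE := ((((tendsto_const_nhds (x := (1:ℝ))).sub (hs.const_mul 2)).add
      ((hs.pow 2).mul (hl 3))).add ((hs.pow 2).mul (hl 1))).sub
        ((hs.pow 3).mul (((hl 3).mul (hl 3)).mul (hl 4))) |>.sub
        ((hs.pow 3).mul (((hl 1).mul (hl 1)).mul hl0))
    have hsq : c⁻¹ = (√c)⁻¹^2 := by rw [inv_pow, Real.sq_sqrt hcp.le]
    have hpos := num_aux (√c)⁻¹ (inv_pos.2 (Real.sqrt_pos.2 hcp)) (by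
      rw [show (√c)⁻¹^6 = ((√c)⁻¹^2)^3 by ring, ← hsq, inv_pow, one_div]
      gcongr)
    rw [← hsq] at hpos
    have hev := hE.eventually (lt_mem_nhds (a := 0) (by rw [hsq] at hpos ⊢; exact hpos))
    obtain ⟨N, hN⟩ := eventually_atTop.1 hev
    exact ⟨N, fun p hp => Or.inr (hN p hp)⟩

lemma T_step (a R : ℕ → ℝ) (hR : ∀ n, 0 < R n)
    (haR : ∀ n, a n = R n * a (n+1)) (r : ℝ) (j : ℕ) :
    a (j+1) * r^(j+1) = a j * r^j * (r / R j) := by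
  have := hR j
  rw [haR j]; field_simp; ring

lemma R_mono (Q R : ℕ → ℝ) (hR : ∀ n, 0 < R n) (h2 : ∀ n, 2 ≤ Q n)
    (hRQ : ∀ n, R (n+1) = Q n * R n) : Monotone R := by
  apply monotone_nat_of_le_succ
  intro n; rw [hRQ]; nlinarith [hR n, h2 n]

/-- ratio bounds -/
lemma T_right (a Q R : ℕ → ℝ) (ha : ∀ n, 0 < a n) (hR : ∀ n, 0 < R n) (hm : Monotone R)
    (haR : ∀ n, a n = R n * a (n+1)) (hQ : ∀ n, 9/4 ≤ Q n) (hRQ : ∀ n, R (n+1) = Q n * R n)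
    (n j : ℕ) (hj : n + 1 ≤ j) :
    a (j+1) * (R n * √(Q n))^(j+1) ≤ 2/3 * (a j * (R n * √(Q n))^j) := by
  have hw : 3/2 ≤ √(Q n) := by
    apply Real.le_sqrt_of_sq_le; linarith [hQ n]
  have hw2 : √(Q n)^2 = Q n := Real.sq_sqrt (by linarith [hQ n])
  rw [T_step a R hR haR, mul_comm]
  have hp : 0 < a j * (R n * √(Q n))^j := by have := ha j; have := hR n; positivity
  apply mul_le_mul_of_nonneg_right _ hp.le
  have h1 := hm hj
  rw [hRQ] at h1
  rw [div_le_iff₀ (hR j)]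
  have h3 : R n * √(Q n) * (3/2) ≤ R n * √(Q n) * √(Q n) :=
    mul_le_mul_of_nonneg_left hw (by have := hR n; positivity)
  have h4 : R n * √(Q n) * √(Q n) = Q n * R n := by
    linear_combination R n * hw2
  linarith

lemma T_left (a Q R : ℕ → ℝ) (ha : ∀ n, 0 < a n) (hR : ∀ n, 0 < R n) (hm : Monotone R)
    (haR : ∀ n, a n = R n * a (n+1)) (hQ : ∀ n, 9/4 ≤ Q n) 
    (n j : ℕ) (hj : j < n + 1) :
    a j * (R n * √(Q n))^j ≤ 2/3 * (a (j+1) * (R n * √(Q n))^(j+1)) := by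
  have hw : 3/2 ≤ √(Q n) := by
    apply Real.le_sqrt_of_sq_le; linarith [hQ n]
  rw [T_step a R hR haR]
  have hp : 0 < a j * (R n * √(Q n))^j := by have := ha j; have := hR n; positivity
  have h1 := hm (by omega : j ≤ n)
  have h2 : 3/2 ≤ R n * √(Q n) / R j := by
    rw [le_div_iff₀ (hR j)]
    nlinarith [hR n, hR j]
  nlinarith

lemma T_vals (a Q R : ℕ → ℝ) (ha : ∀ n, 0 < a n) (hR : ∀ n, 0 < R n)
    (haR : ∀ n, a n = R n * a (n+1)) (hQ : ∀ n, 0 < Q n) (hRQ : ∀ n, R (n+1) = Q n * R n)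
    (p : ℕ) (T : ℕ → ℝ) (hT : ∀ j, T j = a j * (R (p+2) * √(Q (p+2)))^j)
    (s : ℝ) (hs : s = (√(Q (p+2)))⁻¹) :
    T (p+4) = T (p+3) * s ∧ T (p+2) = T (p+3) * s ∧ T (p+5) = T (p+3) * (s^2 * (Q (p+3))⁻¹) ∧
    T (p+1) = T (p+3) * (s^2 * (Q (p+1))⁻¹) ∧
    T (p+6) = T (p+3) * (s^3 * ((Q (p+3))⁻¹ * (Q (p+3))⁻¹ * (Q (p+4))⁻¹)) ∧
    T p = T (p+3) * (s^3 * ((Q (p+1))⁻¹ * (Q (p+1))⁻¹ * (Q p)⁻¹)) := by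
  have hst : ∀ j, T (j+1) = T j * (R (p+2) * √(Q (p+2)) / R j) := by
    intro j; rw [hT, hT, T_step a R hR haR]
  have hw2 : √(Q (p+2))^2 = Q (p+2) := Real.sq_sqrt (hQ _).le
  have hw : 0 < √(Q (p+2)) := Real.sqrt_pos.2 (hQ _)
  have e1 := hRQ p
  have e2 := hRQ (p+1)
  have e3 := hRQ (p+2)
  have e4 := hRQ (p+3)
  have e5 := hRQ (p+4)
  have s0 := hst p
  have s1 := hst (p+1)
  have s2 := hst (p+2)
  have s3 := hst (p+3)
  have s4 := hst (p+4)
  have s5 := hst (p+5)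
  simp only [add_assoc, Nat.reduceAdd] at *
  generalize √(Q (p+2)) = w at *
  subst hs
  rw [← hw2] at e3
  rw [e3] at e4
  rw [e4] at e5
  rw [e1] at e2
  rw [e5] at s5
  rw [e4] at s4
  rw [e3] at s3
  rw [e2] at s5 s4 s3 s2 s1 s0
  rw [e1] at s1
  have q0 := hQ p
  have q1 := hQ (p+1)
  have q3 := hQ (p+3)
  have q4 := hQ (p+4)
  have r0 := hR p
  have t0 : 0 < T p := by rw [hT]; have := ha p; have := hR (p+2); positivity
  rw [s5, s4, s3, s2, s1, s0]
  refine ⟨?_, ?_, ?_, ?_, ?_, ?_⟩ <;> field_simp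

lemma entire_aux (a : ℕ → ℝ) (f : ℂ → ℂ) (ha : ∀ k, 0 < a k)
    (hf : ∀ z : ℂ, HasSum (fun k : ℕ => (a k : ℂ) * z ^ k) (f z)) : Differentiable ℂ f := by
  intro z
  have hfe : f = fun w => ∑' k : ℕ, (a k : ℂ) * w ^ k := by
    ext w; exact (hf w).tsum_eq.symm
  have hs : Summable (fun k => a k * (‖z‖ + 1)^k) := by
    have := (hf ((‖z‖ + 1 : ℝ) : ℂ)).summable
    exact_mod_cast this
  have hd := Complex.differentiableOn_tsum_of_summable_norm (F := fun k (w:ℂ) => (a k : ℂ) * w ^ k)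
    (U := Metric.ball 0 (‖z‖+1)) hs
    (fun k => by fun_prop) Metric.isOpen_ball (by
      intro k w hw
      have hw' : ‖w‖ ≤ ‖z‖ + 1 := by simpa using (Metric.mem_ball.1 hw).le
      rw [norm_mul, norm_pow, Complex.norm_real, Real.norm_of_nonneg (ha k).le]
      have := ha k
      gcongr)
  rw [hfe]
  exact hd.differentiableAt (Metric.isOpen_ball.mem_nhds (by simp))

lemma core_aux (a : ℕ → ℝ) (f : ℂ → ℂ) (ha : ∀ k, 0 < a k)
    (hf : ∀ z : ℂ, HasSum (fun k : ℕ => (a k : ℂ) * z ^ k) (f z))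
    (Q R : ℕ → ℝ) (hR : ∀ n, 0 < R n) (haR : ∀ n, a n = R n * a (n+1))
    (hRQ : ∀ n, R (n+1) = Q n * R n) (hQm : Monotone Q) (hQ0 : 9/4 ≤ Q 0) (h16 : 16 ≤ Q 0 ^ 3) :
    {z : ℂ | f z = 0 ∧ ¬ (z.im = 0 ∧ deriv f z ≠ 0)}.Finite := by
  have hQ : ∀ n, 9/4 ≤ Q n := fun n => hQ0.trans (hQm (Nat.zero_le n))
  have hQpos : ∀ n, 0 < Q n := fun n => by linarith [hQ n]
  have hRm : Monotone R := R_mono Q R hR (fun n => by linarith [hQ n]) hRQ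
  have hfd := entire_aux a f ha hf
  set r : ℕ → ℝ := fun n => R n * √(Q n) with hr
  have hw : ∀ n, 3/2 ≤ √(Q n) := fun n => by
    apply Real.le_sqrt_of_sq_le; linarith [hQ n]
  have hww : ∀ n, √(Q n) * √(Q n) = Q n := fun n => Real.mul_self_sqrt (hQpos n).le
  have hrpos : ∀ n, 0 < r n := fun n => by
    have := hR n; have := hw n; simp only [hr]; positivity
  have hrR : ∀ n, R n < r n := fun n => by
    simp only [hr]; nlinarith [hR n, hw n]
  have hrR' : ∀ n, r n < R (n+1) := fun n => by
    rw [hRQ, ← hww n]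
    have := hrpos n
    simp only [hr] at this ⊢
    nlinarith [hw n]
  have hrm : StrictMono r := strictMono_nat_of_lt_succ fun n => (hrR' n).trans (hrR (n+1))
  -- r tends to infinity
  have hRge : ∀ n, R 0 * 2^n ≤ R n := by
    intro n
    induction n with
    | zero => simp
    | succ n ih => rw [hRQ, pow_succ]; nlinarith [hQ n, hR n]
  have hrtop : Tendsto r atTop atTop := by
    apply tendsto_atTop_mono (fun n => (hRge n).trans (hrR n).le)
    exact (tendsto_pow_atTop_atTop_of_one_lt (by norm_num : (1:ℝ) < 2)).const_mul_atTop (hR 0)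
  -- real values
  have hreal : ∀ x : ℝ, HasSum (fun k => a k * x^k) (f x).re ∧ (f x).im = 0 := by
    intro x
    have h := hf x
    constructor
    · have := Complex.hasSum_re h
      refine this.congr_fun ?_ |> fun h => h
      intro k
      norm_cast
    · have := Complex.hasSum_im h
      have h0 : (fun k => ((a k : ℂ) * (x:ℂ)^k).im) = fun _ => 0 := by
        ext k; norm_cast
      rw [h0] at this
      exact this.unique hasSum_zero
  -- signs
  obtain ⟨N0, hN0⟩ := E_pos Q hQm hQpos h16
  have hsign : ∀ n, N0 + 2 ≤ n → 0 < (-1:ℝ)^(n+1) * (f ((-r n : ℝ) : ℂ)).re := by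
    intro n hn
    obtain ⟨p, rfl⟩ : ∃ p, n = p + 2 := ⟨n - 2, by omega⟩
    have hE := hN0 p (by omega)
    have hs := (hreal (-r (p+2))).1
    set T : ℕ → ℝ := fun j => a j * (R (p+2) * √(Q (p+2)))^j with hT
    have hTpos : ∀ j, 0 < T j := fun j => by
      have := ha j; have := hrpos (p+2); simp only [hT]; simp only [hr] at this; positivity
    have hs' : HasSum (fun j => (-1)^j * T j) (f ((-r (p+2) : ℝ) : ℂ)).re := by
      refine hs.congr_fun ?_ |> fun h => h
      intro j
      simp only [hT, hr]
      rw [neg_pow]; ring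
    have hsg := sign_aux T p hTpos
      (fun j hj => by
        have := T_right a Q R ha hR hRm haR hQ hRQ (p+2) j hj
        have := hTpos j
        simp only [hT] at this ⊢
        linarith)
      (fun j hj => by
        have := T_left a Q R ha hR hRm haR hQ (p+2) j hj
        have := hTpos (j+1)
        simp only [hT] at this ⊢
        linarith) _ hs'
    obtain ⟨v1, v2, v3, v4, v5, v6⟩ := T_vals a Q R ha hR haR hQpos hRQ p T (fun j => rfl) _ rfl
    rw [v1, v2, v3, v4, v5, v6] at hsg
    have hp := hTpos (p+3)
    rcases hE with hE | hE
    · refine lt_of_lt_of_le ?_ hsg.2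
      have := mul_pos hp hE
      linarith
    · refine lt_of_lt_of_le ?_ hsg.1
      have := mul_pos hp hE
      linarith
  set N := N0 + 2 with hN
  have hcont : Continuous (fun x : ℝ => (f ((-x : ℝ) : ℂ)).re) := by
    have := hfd.continuous
    fun_prop
  have hzero : ∀ k, ∃ x : ℝ, N ≤ k → r k < x ∧ x < r (k+1) ∧ f ((-x : ℝ) : ℂ) = 0 := by
    intro k
    by_cases hk : N ≤ k
    swap
    · exact ⟨0, fun h => absurd h hk⟩
    have h1 := hsign k hk
    have h2 := hsign (k+1) (by omega)
    have hlt := hrm (Nat.lt_succ_self k)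
    have hx : ∃ x ∈ Set.Ioo (r k) (r (k+1)), (f ((-x : ℝ) : ℂ)).re = 0 := by
      rcases neg_one_pow_eq_or ℝ (k+1) with h | h
      · rw [pow_succ, h] at h2
        rw [h] at h1
        have := intermediate_value_Ioo' hlt.le hcont.continuousOn
        exact this ⟨by linarith, by linarith⟩
      · rw [pow_succ, h] at h2
        rw [h] at h1
        have := intermediate_value_Ioo hlt.le hcont.continuousOn
        exact this ⟨by linarith, by linarith⟩
    obtain ⟨x, hx, hfx⟩ := hx
    exact ⟨x, fun _ => ⟨hx.1, hx.2, Complex.ext hfx (hreal (-x)).2⟩⟩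
  choose x hx using hzero
  by_contra hinf
  obtain ⟨B, hBsub, hBcard⟩ := Set.Infinite.exists_subset_card_eq hinf (N+3)
  -- log R sums
  have hf0 : f 0 = (a 0 : ℂ) := by
    have h := hf 0
    have h' := hasSum_single (f := fun k : ℕ => (a k : ℂ) * 0 ^ k) 0 (by
      intro k hk; simp [hk])
    simpa using h.unique h'
  have hloga : ∀ n, Real.log (a n) = Real.log (a 0) - ∑ k ∈ range n, Real.log (R k) := by
    intro n
    induction n with
    | zero => simp
    | succ n ih =>
      rw [sum_range_succ]
      have := haR n
      rw [this, Real.log_mul (hR n).ne' (ha (n+1)).ne'] at ih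
      linarith
  set L : ℕ → ℝ := fun n => Real.log (r n) with hL
  have hLtop : Tendsto L atTop atTop := Real.tendsto_log_atTop.comp hrtop
  have hLm : Monotone L := fun i j hij => Real.log_le_log (hrpos i) (hrm.monotone hij)
  have hkey : ∀ᶠ n in atTop, L n ≤ Real.log 5 - Real.log (R 0)
      - ∑ k ∈ range (N+1), L k + ∑ u ∈ B, Real.log ‖u‖ := by
    have ev1 : ∀ᶠ n in atTop, ∀ u ∈ B, ‖u‖ ≤ r n := by
      rw [Filter.eventually_all_finset]
      intro u _
      exact hrtop.eventually_ge_atTop _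
    filter_upwards [ev1, eventually_ge_atTop (N+1), hrtop.eventually_ge_atTop (1 / a 1)]
      with n hBn hNn ha1
    set X : Finset ℂ := (Ico N n).image (fun k => ((-x k : ℝ) : ℂ)) with hXdef
    have hxpos : ∀ k, N ≤ k → 0 < x k := fun k hk => (hrpos k).trans (hx k hk).1
    have hxn : ∀ k, N ≤ k → ‖((-x k : ℝ) : ℂ)‖ = x k := fun k hk => by
      rw [Complex.norm_real, norm_neg, Real.norm_of_nonneg (hxpos k hk).le]
    have hinj : Set.InjOn (fun k => ((-x k : ℝ) : ℂ)) (Ico N n : Set ℕ) := by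
      have hlt : ∀ i j, N ≤ i → i < j → x i < x j := by
        intro i j hi hij
        calc x i < r (i+1) := (hx i hi).2.1
          _ ≤ r j := hrm.monotone hij
          _ < x j := (hx j (by omega)).1
      intro i hi j hj hij
      have hi' : N ≤ i := (mem_Ico.1 (by simpa using hi)).1
      have hj' : N ≤ j := (mem_Ico.1 (by simpa using hj)).1
      have hij' : x i = x j := by
        have := Complex.ofReal_injective hij
        linarith
      rcases lt_trichotomy i j with h | h | h
      · exact absurd hij' (hlt i j hi' h).ne
      · exact h
      · exact absurd hij' (hlt j i hj' h).ne'
    have hTpos : ∀ j, 0 < a j * r n ^ j := fun j => by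
      have := ha j; have := hrpos n; positivity
    have hTl := T_left a Q R ha hR hRm haR hQ n
    have hTm : ∀ i, 1 + i ≤ n + 1 → a 1 * r n ^ 1 ≤ a (1+i) * r n ^ (1+i) := by
      intro i
      induction i with
      | zero => intro _; simp
      | succ i ih =>
        intro hi
        have h1 := ih (by omega)
        have h2 := hTl (1+i) (by omega)
        have h3 := hTpos (1+i+1)
        simp only [← add_assoc]
        simp only [hr] at h1 h3 ⊢
        linarith
    have hT1 : 1 ≤ a (n+1) * r n ^ (n+1) := by
      have h := hTm n (by omega)
      rw [add_comm 1 n] at h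
      rw [div_le_iff₀ (ha 1)] at ha1
      linarith
    have hjen := jensen_aux f hfd (by rw [hf0]; exact_mod_cast (ha 0).ne') X B
      (by
        intro u hu
        obtain ⟨k, hk, rfl⟩ := mem_image.1 hu
        exact (hx k (mem_Ico.1 hk).1).2.2)
      (fun u hu => (hBsub hu).1)
      (by
        intro u hu huB
        obtain ⟨k, hk, rfl⟩ := mem_image.1 hu
        have := (hBsub huB).2
        by_contra hc
        exact this ⟨by simp, hc⟩)
      (r n) (5 * (a (n+1) * r n ^ (n+1))) (hrpos n) (by linarith)
      (by
        intro u hu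
        obtain ⟨k, hk, rfl⟩ := mem_image.1 hu
        have hk' := mem_Ico.1 hk
        rw [hxn k hk'.1]
        exact (hx k hk'.1).2.1.le.trans (hrm.monotone hk'.2))
      hBn
      (by
        intro z hz
        have hsum := (hreal (r n)).1
        have hb := sum_bound_aux (fun j => a j * r n ^ j) (n+1) hTpos
          (fun j hj => T_right a Q R ha hR hRm haR hQ hRQ n j hj) hTl _ hsum
        refine le_trans ?_ hb
        rw [← (hf z).tsum_eq, ← hsum.tsum_eq]
        refine tsum_of_norm_bounded hsum.summable.hasSum ?_
        intro j
        rw [norm_mul, norm_pow, hz, Complex.norm_real, Real.norm_of_nonneg (ha j).le])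
    rw [sum_image hinj] at hjen
    have hsX : ∑ k ∈ Ico N n, (L n - L (k+1)) ≤
        ∑ k ∈ Ico N n, (Real.log (r n) - Real.log ‖((-x k : ℝ) : ℂ)‖) := by
      apply sum_le_sum
      intro k hk
      have hk' := mem_Ico.1 hk
      rw [hxn k hk'.1]
      have := Real.log_le_log (hxpos k hk'.1) (hx k hk'.1).2.1.le
      simp only [hL]
      linarith
    have hsX2 : ∑ k ∈ Ico N n, (L n - L (k+1)) = ∑ k ∈ Ico (N+1) n, (L n - L k) := by
      rw [sum_Ico_add' (fun k => L n - L k) N n 1, sum_Ico_succ_top (by omega)]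
      simp
    have hsB : ∑ u ∈ B, (Real.log (r n) - Real.log ‖u‖)
        = (N+3) * L n - ∑ u ∈ B, Real.log ‖u‖ := by
      rw [sum_sub_distrib, sum_const, hBcard]; simp [hL]
    have hlogM : Real.log (5 * (a (n+1) * r n ^ (n+1)))
        = Real.log 5 + Real.log (a (n+1)) + (n+1) * L n := by
      rw [Real.log_mul (by norm_num) (hTpos _).ne', Real.log_mul (ha _).ne'
        (pow_pos (hrpos n) _).ne', Real.log_pow]
      push_cast; simp only [hL]; ring
    have hsR : ∑ k ∈ range n, L k ≤ ∑ k ∈ range n, Real.log (R (k+1)) := by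
      apply sum_le_sum
      intro k _
      exact Real.log_le_log (hrpos k) (hrR' k).le
    have hla := hloga (n+1)
    rw [sum_range_succ'] at hla
    have hsplit : ∑ k ∈ range n, (L n - L k) = ∑ k ∈ range (N+1), (L n - L k)
        + ∑ k ∈ Ico (N+1) n, (L n - L k) := (sum_range_add_sum_Ico _ hNn).symm
    rw [sum_sub_distrib, sum_sub_distrib, sum_const, sum_const] at hsplit
    simp only [card_range, nsmul_eq_mul] at hsplit
    push_cast at hsplit
    rw [hlogM, hsB, hla, hf0, Complex.norm_real, Real.norm_of_nonneg (ha 0).le] at hjen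
    rw [hsX2] at hsX
    linarith
  obtain ⟨n, h1, h2⟩ := (hkey.and (hLtop.eventually_gt_atTop _)).exists
  exact absurd h1 (not_le.2 h2)

theorem stmt0 (a : ℕ → ℝ) (f : ℂ → ℂ)
    (ha : ∀ k, 0 < a k)
    (hf : ∀ z : ℂ, HasSum (fun k : ℕ => (a k : ℂ) * z ^ k) (f z))
    (hq2 : 2 * (2 : ℝ) ^ ((1 : ℝ) / 3) ≤ secondQuotient a 2)
    (hmono : ∀ n : ℕ, 2 ≤ n → secondQuotient a n ≤ secondQuotient a (n + 1)) :
    ∃ S : Set ℂ, S.Finite ∧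
      ∀ z : ℂ, f z = 0 → z ∉ S → z.im = 0 ∧ deriv f z ≠ 0 := by
  have hk3 : (2 * (2 : ℝ) ^ ((1 : ℝ) / 3))^3 = 16 := by
    rw [mul_pow, ← Real.rpow_natCast, ← Real.rpow_natCast, ← Real.rpow_mul (by norm_num)]
    norm_num
  have hkpos : 0 < 2 * (2 : ℝ) ^ ((1 : ℝ) / 3) := by positivity
  have h16 : 16 ≤ secondQuotient a 2 ^ 3 := by
    rw [← hk3]; gcongr
  have h94 : 9/4 ≤ secondQuotient a 2 := by
    refine le_trans ?_ hq2
    by_contra hc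
    push Not at hc
    have : (2 * (2 : ℝ) ^ ((1 : ℝ) / 3))^3 < (9/4)^3 := by gcongr
    rw [hk3] at this
    norm_num at this
  refine ⟨{z : ℂ | f z = 0 ∧ ¬ (z.im = 0 ∧ deriv f z ≠ 0)}, ?_, ?_⟩
  · refine core_aux a f ha hf (fun n => secondQuotient a (n+2)) (fun n => a n / a (n+1))
      (fun n => div_pos (ha n) (ha (n+1))) ?_ ?_ ?_ h94 h16
    · intro n
      have := ha (n+1)
      field_simp
    · intro n
      have h0 := ha n
      have h1 := ha (n+1)
      have h2 := ha (n+2)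
      simp only [secondQuotient, Nat.add_sub_cancel, show n + 2 - 1 = n + 1 by omega]
      field_simp
    · exact monotone_nat_of_le_succ fun n => hmono (n+2) (by omega)
  · intro z hz hzS
    by_contra hc
    exact hzS ⟨hz, hc⟩
end

section
/- Let f(z) = \sum_{k=0}^\infty a_k z^k, with a_k > 0 for all k, be an entire function such that 3 \le q_2(f) \le q_3(f) \le q_4(f) \le \cdots. Suppose also that condition (*) holds: for every integer j_0 \ge 2 such that q_{j_0}(f) < 4 and q_{j_0+1}(f) \ge 4, either q_{j_0-1}(f)/q_{j_0+1}(f) \ge 0.525 or q_{j_0}(f) \ge 3.4303. Then all complex zeros of f are real (equivalently, f belongs to the Laguerre–Pólya class of type I) if and only if there exists z_0 \in [-a_1/a_2, 0] such that f(z_0) \le 0. -/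
lemma lp_numA (t α β : ℝ) (ht : 0 < t) (ht1 : t ^ 2 ≤ 1 / 3)
    (hα1 : α ≤ 1 / 3) (hα : t ^ 2 ≤ α) (hβ : 0.525 * α ≤ β) (hβ1 : β ≤ t ^ 2) :
    0 < 1 - 2 * t + t ^ 2 * β + t ^ 2 * α - t ^ 3 * β ^ 3 - t ^ 3 * α ^ 2 / 3 := by
  have hα0 : 0 < α := lt_of_lt_of_le (by positivity) hα
  have htu : t ≤ 0.57736 := by nlinarith
  have ht2 : 0 < t ^ 2 := by positivity
  have hβ0 : 0 < β := by nlinarith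
  have hβ3 : β ≤ 1 / 3 := by linarith
  -- first step: β
  have h1 : t ^ 2 * (0.525 * α) - t ^ 3 * (0.525 * α) ^ 3 ≤ t ^ 2 * β - t ^ 3 * β ^ 3 := by
    set b := 0.525 * α with hb
    have hb0 : 0 < b := by positivity
    have hb1 : b ≤ 1 / 3 := by linarith
    have e1 : β ^ 2 + β * b + b ^ 2 ≤ 1 := by nlinarith
    have e2 : t * (β ^ 2 + β * b + b ^ 2) ≤ 1 := by
      have : 0 ≤ β ^ 2 + β * b + b ^ 2 := by positivity
      nlinarith
    have e3 : 0 ≤ (β - b) * (t ^ 2 * (1 - t * (β ^ 2 + β * b + b ^ 2))) :=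
      mul_nonneg (by linarith) (mul_nonneg ht2.le (by linarith))
    nlinarith
  -- second step : α ≥ t^2
  set s := t ^ 2 with hs
  have h2 : 1.525 * s * s - t * s * (0.145 * s ^ 3 + s ^ 2 / 3) ≤
      1.525 * s * α - t * s * (0.145 * α ^ 3 + α ^ 2 / 3) := by
    have e1 : 0.145 * (α ^ 2 + α * s + s ^ 2) + (α + s) / 3 ≤ 1 := by nlinarith
    have e2 : t * (0.145 * (α ^ 2 + α * s + s ^ 2) + (α + s) / 3) ≤ 1 := by
      have : 0 ≤ 0.145 * (α ^ 2 + α * s + s ^ 2) + (α + s) / 3 := by positivity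
      nlinarith
    have e3 : 0 ≤ (α - s) * (s * (1.525 - t * (0.145 * (α ^ 2 + α * s + s ^ 2) + (α + s) / 3))) :=
      mul_nonneg (by linarith) (mul_nonneg ht2.le (by linarith))
    nlinarith
  have h3 : t * s * (0.145 * s ^ 3 + s ^ 2 / 3) ≤ 0.0736 * s ^ 2 := by
    have e1 : 0.145 * s ^ 2 + s / 3 ≤ 0.1273 := by nlinarith
    have e2 : t * (0.145 * s ^ 2 + s / 3) ≤ 0.0736 := by
      have : 0 ≤ 0.145 * s ^ 2 + s / 3 := by positivity
      nlinarith
    have : 0 ≤ s ^ 2 * (0.0736 - t * (0.145 * s ^ 2 + s / 3)) :=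
      mul_nonneg (by positivity) (by linarith)
    nlinarith
  have h4 : 0 < 1 - 2 * t + 1.4514 * s ^ 2 := by
    rw [hs]
    nlinarith [sq_nonneg (t ^ 2 - 1 / 3), sq_nonneg (t - 0.577)]
  have h5 : t ^ 3 = t * s := by rw [hs]; ring
  rw [h5] at h1 ⊢
  have h6 : 0 ≤ t * s * α ^ 3 := by positivity
  nlinarith

lemma lp_numB (t α : ℝ) (ht : 0 < t) (ht1 : t ^ 2 * 3.4303 ≤ 1)
    (hα1 : α ≤ 1 / 3) (hα : t ^ 2 ≤ α) :
    0 < 1 - 2 * t + t ^ 2 * α - t ^ 3 * α ^ 2 / 3 := by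
  have hα0 : 0 < α := lt_of_lt_of_le (by positivity) hα
  have htu : t ≤ 0.53993 := by nlinarith
  have ht2 : 0 < t ^ 2 := by positivity
  set s := t ^ 2 with hs
  have hsu : s ≤ 0.29153 := by linarith
  have h2 : s * s - t * s * (s ^ 2 / 3) ≤ s * α - t * s * (α ^ 2 / 3) := by
    have e2 : t * ((α + s) / 3) ≤ 1 := by nlinarith
    have e3 : 0 ≤ (α - s) * (s * (1 - t * ((α + s) / 3))) :=
      mul_nonneg (by linarith) (mul_nonneg ht2.le (by linarith))
    nlinarith
  have h3 : t * s * (s ^ 2 / 3) ≤ 0.05248 * s ^ 2 := by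
    have e2 : t * (s / 3) ≤ 0.05248 := by nlinarith
    have : 0 ≤ s ^ 2 * (0.05248 - t * (s / 3)) :=
      mul_nonneg (by positivity) (by linarith)
    nlinarith
  have h4 : 0 < 1 - 2 * t + 0.94752 * s ^ 2 := by
    rw [hs]
    nlinarith [sq_nonneg (t ^ 2 - 0.29152), sq_nonneg (t - 0.539926)]
  have h5 : t ^ 3 = t * s := by rw [hs]; ring
  rw [h5]
  nlinarith

lemma lp_alt_low (T : ℕ → ℝ) (h0 : 0 ≤ T 0) (m : ℕ) (hT : ∀ j < m, T j ≤ T (j + 1)) :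
    0 ≤ ∑ j ∈ Finset.range (m + 1), (-1) ^ (m + j) * T j ∧
    ∑ j ∈ Finset.range (m + 1), (-1) ^ (m + j) * T j ≤ T m := by
  induction m with
  | zero => simp [h0]
  | succ m ih =>
    have ih' := ih (fun j hj => hT j (by omega))
    have e : ∑ j ∈ Finset.range (m + 1 + 1), (-1 : ℝ) ^ (m + 1 + j) * T j =
        T (m + 1) - ∑ j ∈ Finset.range (m + 1), (-1 : ℝ) ^ (m + j) * T j := by
      rw [Finset.sum_range_succ, ← two_mul, pow_mul]
      have : ∀ j, (-1 : ℝ) ^ (m + 1 + j) * T j = - ((-1 : ℝ) ^ (m + j) * T j) := by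
        intro j; rw [show m + 1 + j = m + j + 1 by ring, pow_succ]; ring
      simp only [this, Finset.sum_neg_distrib]
      norm_num; ring
    rw [e]
    have := hT m (by omega)
    constructor <;> linarith [ih'.1, ih'.2]

lemma lp_alt_succ (T : ℕ → ℝ) (m : ℕ) :
    ∑ j ∈ Finset.range (m + 1 + 1), (-1 : ℝ) ^ (m + 1 + j) * T j =
        T (m + 1) - ∑ j ∈ Finset.range (m + 1), (-1 : ℝ) ^ (m + j) * T j := by
  rw [Finset.sum_range_succ, ← two_mul, pow_mul]
  have : ∀ j, (-1 : ℝ) ^ (m + 1 + j) * T j = - ((-1 : ℝ) ^ (m + j) * T j) := by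
    intro j; rw [show m + 1 + j = m + j + 1 by ring, pow_succ]; ring
  simp only [this, Finset.sum_neg_distrib]
  norm_num; ring

lemma lp_up_succ (T : ℕ → ℝ) (j l : ℕ) :
    ∑ i ∈ Finset.range (l + 1), (-1 : ℝ) ^ i * T (j + i) =
      T j - ∑ i ∈ Finset.range l, (-1 : ℝ) ^ i * T (j + 1 + i) := by
  rw [Finset.sum_range_succ']
  have : ∀ i, (-1 : ℝ) ^ (i + 1) * T (j + (i + 1)) = - ((-1 : ℝ) ^ i * T (j + 1 + i)) := by
    intro i; rw [show j + (i + 1) = j + 1 + i by ring, pow_succ]; ring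
  simp only [this, Finset.sum_neg_distrib]
  simp; ring

lemma lp_alt_up (T : ℕ → ℝ) (h0 : ∀ j, 0 ≤ T j) (l : ℕ) :
    ∀ j : ℕ, (∀ i, j ≤ i → T (i + 1) ≤ T i) →
    0 ≤ ∑ i ∈ Finset.range l, (-1 : ℝ) ^ i * T (j + i) ∧
    ∑ i ∈ Finset.range l, (-1 : ℝ) ^ i * T (j + i) ≤ T j := by
  induction l with
  | zero => intro j _; simp [h0]
  | succ l ih =>
    intro j hT
    have ih' := ih (j + 1) (fun i hi => hT i (by omega))
    rw [lp_up_succ]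
    have := hT j le_rfl
    constructor <;> linarith [ih'.1, ih'.2]

set_option maxHeartbeats 4000000 in
/-- The sign of an alternating sum at the `k = m+2`-nd test point. -/
lemma lp_sign (n m : ℕ) (T Q : ℕ → ℝ) (hmn : m + 3 ≤ n)
    (hpos : ∀ j ≤ n, 0 < T j) (hzero : ∀ j, n < j → T j = 0)
    (hQ : ∀ j, j + 2 ≤ n → T (j + 1) ^ 2 = Q (j + 2) * (T j * T (j + 2)))
    (hQ3 : ∀ j, 2 ≤ j → j ≤ n → 3 ≤ Q j)
    (hQm : ∀ j, 2 ≤ j → j + 1 ≤ n → Q j ≤ Q (j + 1))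
    (hbal : T (m + 1) = T (m + 3))
    (H : 4 ≤ Q (m + 3) ∨ (m + 4 ≤ n ∧ Q (m + 3) < 4 ∧
      (0.525 * Q (m + 4) ≤ Q (m + 2) ∨ 3.4303 ≤ Q (m + 3)))) :
    0 < ∑ j ∈ Finset.range (n + 1), (-1) ^ (m + 2 + j) * T j := by
  have hnn : ∀ j, 0 ≤ T j := fun j => by
    rcases le_or_gt j n with h | h
    · exact (hpos j h).le
    · exact (hzero j h).ge
  have S0 := hpos (m + 2) (by omega)
  have t0 := hpos (m + 3) (by omega)
  have q3 := hQ3 (m + 3) (by omega) hmn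
  have hS := hQ (m + 1) (by omega)
  rw [show m + 1 + 1 = m + 2 by ring, show m + 1 + 2 = m + 3 by ring, hbal] at hS
  -- monotonicity upward
  have hup : ∀ i, T (m + 2 + i + 1) ≤ T (m + 2 + i) := by
    intro i
    induction i with
    | zero => simp only [add_zero]; rw [show m + 2 + 1 = m + 3 by ring]; nlinarith
    | succ i ih =>
      rcases le_or_gt (m + 2 + i + 2) n with h | h
      · have e := hQ (m + 2 + i) h
        have p1 := hpos (m + 2 + i) (by omega)
        have p2 := hpos (m + 2 + i + 1) (by omega)
        have p3 := hpos (m + 2 + i + 2) h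
        have g := hQ3 (m + 2 + i + 2) (by omega) h
        rw [show m + 2 + (i + 1) + 1 = m + 2 + i + 2 by ring, show m + 2 + (i + 1) = m + 2 + i + 1 by ring]
        by_contra hc
        push Not at hc
        have e1 : T (m + 2 + i + 1) ^ 2 < T (m + 2 + i) * T (m + 2 + i + 2) := by nlinarith
        have : 0 < T (m + 2 + i) * T (m + 2 + i + 2) := by positivity
        nlinarith
      · rw [hzero _ (by omega : n < m + 2 + (i + 1) + 1)]; exact hnn _
  have hdn : ∀ i, i ≤ m + 1 → T (m + 1 - i) ≤ T (m + 1 - i + 1) := by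
    intro i
    induction i with
    | zero => intro _; simp only [Nat.sub_zero]; rw [hbal, show m + 1 + 1 = m + 2 by ring]; nlinarith
    | succ i ih =>
      intro hi
      have ih' := ih (by omega)
      obtain ⟨j, hj⟩ : ∃ j, m + 1 - (i + 1) = j := ⟨_, rfl⟩
      have hj' : m + 1 - i = j + 1 := by omega
      rw [hj]; rw [hj'] at ih'
      have e := hQ j (by omega)
      have p1 := hpos j (by omega)
      have p2 := hpos (j + 1) (by omega)
      have p3 := hpos (j + 2) (by omega)
      have g := hQ3 (j + 2) (by omega) (by omega)
      by_contra hc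
      push Not at hc
      have e1 : T (j + 1) ^ 2 < T j * T (j + 2) := by
        rw [show j + 1 + 1 = j + 2 by ring] at ih'; nlinarith
      have : 0 < T j * T (j + 2) := by positivity
      nlinarith
  have hdn' : ∀ j < m + 2, T j ≤ T (j + 1) := by
    intro j hj
    have := hdn (m + 1 - j) (by omega)
    rwa [show m + 1 - (m + 1 - j) = j by omega] at this
  have hup' : ∀ i, m + 2 ≤ i → T (i + 1) ≤ T i := by
    intro i hi
    obtain ⟨d, rfl⟩ := Nat.exists_eq_add_of_le hi
    exact hup d
  -- split the sum
  obtain ⟨l, hl⟩ : ∃ l, n = m + 3 + l := Nat.exists_eq_add_of_le hmn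
  have hsplit : ∑ j ∈ Finset.range (n + 1), (-1 : ℝ) ^ (m + 2 + j) * T j =
      ∑ j ∈ Finset.range (m + 2 + 1), (-1 : ℝ) ^ (m + 2 + j) * T j -
        ∑ i ∈ Finset.range (l + 1), (-1 : ℝ) ^ i * T (m + 3 + i) := by
    rw [show n + 1 = (m + 2 + 1) + (l + 1) by omega, Finset.sum_range_add, sub_eq_add_neg,
      ← Finset.sum_neg_distrib]
    congr 1
    apply Finset.sum_congr rfl
    intro i _
    rw [show m + 2 + (m + 2 + 1 + i) = 2 * (m + 2) + i + 1 by ring, pow_succ, pow_add, pow_mul]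
    norm_num [show m + 2 + 1 + i = m + 3 + i by ring]
  rw [hsplit, lp_alt_succ, lp_alt_succ, lp_up_succ]
  set E := ∑ j ∈ Finset.range (m + 1), (-1 : ℝ) ^ (m + j) * T j with hE
  set F := ∑ i ∈ Finset.range l, (-1 : ℝ) ^ i * T (m + 3 + 1 + i) with hF
  have hF1 := lp_alt_up T hnn l (m + 3 + 1) (fun i hi => hup' i (by omega))
  have hE1 := lp_alt_low T (hnn 0) m (fun j hj => hdn' j (by omega))
  rw [← hF] at hF1
  rw [← hE] at hE1
  rw [show m + 1 + 1 = m + 2 by ring, hbal]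
  -- T m
  have Tm0 := hpos m (by omega)
  have hTm := hQ m (by omega)
  rw [hbal] at hTm
  have q2 := hQ3 (m + 2) (by omega) (by omega)
  have q23 := hQm (m + 2) (by omega) (by omega)
  set S := T (m + 2) with hSdef
  set τ := T (m + 3) with hτ
  set t := τ / S with ht
  have t0' : 0 < t := by positivity
  have hτt : τ = t * S := by rw [ht]; field_simp
  have htq : t ^ 2 * Q (m + 3) = 1 := by
    have : S ^ 2 * (t ^ 2 * Q (m + 3)) = S ^ 2 * 1 := by rw [hτt] at hS; linarith
    exact mul_left_cancel₀ (by positivity) this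
  set α := (Q (m + 2))⁻¹ with hα
  have hα0 : 0 < α := by rw [hα]; positivity
  have hαq : α * Q (m + 2) = 1 := by rw [hα]; field_simp
  have hTmα : T m = t ^ 2 * α * S := by
    have : (Q (m + 2) * S) * T m = (Q (m + 2) * S) * (t ^ 2 * α * S) := by
      rw [hτt] at hTm
      linear_combination (-1) * hTm - t ^ 2 * S ^ 2 * hαq
    exact mul_left_cancel₀ (by positivity) this
  have hα3 : α ≤ 1 / 3 := by nlinarith
  have htα : t ^ 2 ≤ α := by
    by_contra hc
    push Not at hc
    nlinarith
  have ht3 : t ^ 2 ≤ 1 / 3 := by linarith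
  -- lower tail
  have hlow : t ^ 2 * α * S - t ^ 3 * α ^ 2 / 3 * S ≤ E ∧ 0 < E := by
    rcases Nat.eq_zero_or_pos m with hm | hm
    · have : E = T m := by rw [hE, hm]; simp
      rw [this]
      refine ⟨?_, Tm0⟩
      rw [hTmα]
      have : 0 ≤ t ^ 3 * α ^ 2 / 3 * S := by positivity
      linarith
    · obtain ⟨m', hm'⟩ : ∃ m', m = m' + 1 := ⟨m - 1, by omega⟩
      have hE2 : T m - T m' ≤ E := by
        have := (lp_alt_low T (hnn 0) m' (fun j hj => hdn' j (by omega))).2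
        rw [hE, hm', lp_alt_succ]
        linarith
      have hr := hQ m' (by omega)
      have hq := hQ3 (m' + 2) (by omega) (by omega)
      have p := hpos m' (by omega)
      rw [show m' + 2 = m + 1 by omega, show m' + 1 = m by omega, hbal] at hr
      rw [show m' + 2 = m + 1 by omega] at hq
      have hle : T m' ≤ t ^ 3 * α ^ 2 / 3 * S := by
        have e1 : 3 * (T m' * τ) ≤ T m ^ 2 := by
          rw [hr]; exact mul_le_mul_of_nonneg_right hq (by positivity)
        have e2 : (t * S) * T m' ≤ (t * S) * (t ^ 3 * α ^ 2 / 3 * S) := by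
          rw [hTmα, hτt] at e1; nlinarith
        exact le_of_mul_le_mul_left e2 (by positivity)
      have hlt : T m' < T m := by
        have := hdn' m (by omega)
        rw [hbal] at this
        have e3 : 3 * (T m' * τ) ≤ T m ^ 2 := by
          rw [hr]; exact mul_le_mul_of_nonneg_right hq (by positivity)
        by_contra hc
        push Not at hc
        have e4 : T m ^ 2 ≤ T m' * τ := by
          rw [sq]; exact mul_le_mul hc (by exact this) Tm0.le p.le
        have e5 : 0 < T m' * τ := mul_pos p t0
        linarith
      constructor
      · rw [← hTmα]; linarith
      · linarith
  rcases H with H | ⟨hn4, h4, H⟩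
  · -- easy case
    have : 2 * t ≤ 1 := by nlinarith
    rw [hτt]
    nlinarith [hlow.2, hF1.1]
  · rcases H with H | H
    · -- case A
      have q4 := hQ3 (m + 4) (by omega) hn4
      have q34 := hQm (m + 3) (by omega) (by omega)
      rw [show m + 3 + 1 = m + 4 by ring] at q34
      have T4 := hQ (m + 2) (by omega)
      rw [show m + 2 + 1 = m + 3 by ring, show m + 2 + 2 = m + 4 by ring, ← hτ, ← hSdef] at T4
      set β := (Q (m + 4))⁻¹ with hβ
      have hβ0 : 0 < β := by rw [hβ]; positivity
      have hβq : β * Q (m + 4) = 1 := by rw [hβ]; field_simp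
      have hT4β : T (m + 4) = t ^ 2 * β * S := by
        have : (Q (m + 4) * S) * T (m + 4) = (Q (m + 4) * S) * (t ^ 2 * β * S) := by
          rw [hτt] at T4
          linear_combination (-1) * T4 - t ^ 2 * S ^ 2 * hβq
        exact mul_left_cancel₀ (by positivity) this
      have hβt : β ≤ t ^ 2 := by
        by_contra hc
        push Not at hc
        nlinarith
      have hαβ : 0.525 * α ≤ β := by
        have := mul_le_mul_of_nonneg_left H (mul_pos hα0 hβ0).le
        have e1 : α * β * (0.525 * Q (m + 4)) = 0.525 * α := by linear_combination 0.525 * α * hβq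
        have e2 : α * β * Q (m + 2) = β := by linear_combination β * hαq
        linarith
      have key := lp_numA t α β t0' ht3 hα3 htα hαβ hβt
      have hF2 : t ^ 2 * β * S - t ^ 3 * β ^ 3 * S ≤ F := by
        obtain ⟨l', hl'⟩ : ∃ l', l = l' + 1 := ⟨l - 1, by omega⟩
        have e1 : T (m + 4) - T (m + 5) ≤ F := by
          rw [hF, hl', lp_up_succ]
          have := (lp_alt_up T hnn l' (m + 3 + 1 + 1) (fun i hi => hup' i (by omega))).2
          rw [show m + 3 + 1 + 1 = m + 5 by ring] at *
          rw [show m + 3 + 1 = m + 4 by ring]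
          linarith
        have e2 : T (m + 5) ≤ t ^ 3 * β ^ 3 * S := by
          rcases le_or_gt (m + 5) n with h5 | h5
          · have r := hQ (m + 3) (by omega)
            rw [show m + 3 + 1 = m + 4 by ring, show m + 3 + 2 = m + 5 by ring, ← hτ, hT4β, hτt] at r
            have q45 := hQm (m + 4) (by omega) (by omega)
            rw [show m + 4 + 1 = m + 5 by ring] at q45
            have p5 := hpos (m + 5) h5
            have e3 : Q (m + 4) * (t * S * T (m + 5)) ≤ (t ^ 2 * β * S) ^ 2 := by
              rw [r]; exact mul_le_mul_of_nonneg_right q45 (by positivity)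
            have e4 : (t * S) * T (m + 5) ≤ (t * S) * (t ^ 3 * β ^ 3 * S) := by
              have := mul_le_mul_of_nonneg_left e3 hβ0.le
              have e5 : β * (Q (m + 4) * (t * S * T (m + 5))) = t * S * T (m + 5) := by
                linear_combination (t * S * T (m + 5)) * hβq
              rw [e5] at this
              nlinarith
            exact le_of_mul_le_mul_left e4 (by positivity)
          · rw [hzero _ h5]; positivity
        rw [← hT4β]; linarith
      rw [hτt]
      have := mul_pos key S0
      nlinarith [hlow.1]
    · have key := lp_numB t α t0' (by rw [← htq]; exact mul_le_mul_of_nonneg_left H (by positivity)) hα3 htα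
      rw [hτt]
      have := mul_pos key S0
      nlinarith [hlow.1, hF1.1]

open Polynomial in
lemma lp_prod_coeff (s : Finset ℕ) (y : ℕ → ℝ) (hy : ∀ k ∈ s, 0 ≤ y k) :
    (∏ k ∈ s, (1 - C (y k) * X : ℝ[X])).coeff 0 = 1 ∧
    (∏ k ∈ s, (1 - C (y k) * X : ℝ[X])).coeff 1 = - ∑ k ∈ s, y k ∧
    0 ≤ (∏ k ∈ s, (1 - C (y k) * X : ℝ[X])).coeff 2 ∧
    (∏ k ∈ s, (1 - C (y k) * X : ℝ[X])).coeff 2 ≤ (∑ k ∈ s, y k) ^ 2 := by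
  induction s using Finset.induction_on with
  | empty => simp [Polynomial.coeff_one]
  | insert a s ha ih =>
    obtain ⟨h0, h1, h2, h3⟩ := ih (fun k hk => hy k (Finset.mem_insert_of_mem hk))
    have hs : 0 ≤ ∑ k ∈ s, y k := Finset.sum_nonneg (fun k hk => hy k (Finset.mem_insert_of_mem hk))
    have hya := hy a (Finset.mem_insert_self _ _)
    rw [Finset.prod_insert ha, Finset.sum_insert ha]
    set R := ∏ k ∈ s, (1 - C (y k) * X : ℝ[X]) with hR
    have e : (1 - C (y a) * X) * R = R - C (y a) * (R * X) := by ring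
    rw [e]
    simp only [coeff_sub, coeff_C_mul, coeff_mul_X, coeff_mul_X_zero, h0, h1]
    refine ⟨by ring, by ring, ?_, ?_⟩
    · nlinarith [mul_nonneg hya hs]
    · nlinarith [mul_nonneg hya hs]

open Polynomial in
lemma lp_roots (P : ℝ[X]) (n : ℕ) (hn : 3 ≤ n) (hdeg : P.natDegree ≤ n) (c : ℕ → ℝ)
    (hc0 : ∀ k, 2 ≤ k → k ≤ n → 0 < c k)
    (hc : ∀ k, 2 ≤ k → k < n → c k < c (k + 1))
    (hs : ∀ k, 2 ≤ k → k ≤ n → 0 < (-1) ^ k * P.eval (c k)) :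
    ∃ y : ℕ → ℝ, ∃ g : ℝ[X], (∀ k ∈ Finset.Ico 2 n, 0 < y k ∧ y k ≤ 1 / c k) ∧
      g.natDegree ≤ 2 ∧ P = (∏ k ∈ Finset.Ico 2 n, (1 - C (y k) * X)) * g := by
  have hex : ∀ k, ∃ r, 2 ≤ k → k < n → c k < r ∧ r < c (k + 1) ∧ P.eval r = 0 := by
    intro k
    by_cases h : 2 ≤ k ∧ k < n
    · obtain ⟨h2, hk⟩ := h
      have s1 := hs k h2 hk.le
      have s2 := hs (k + 1) (by omega) (by omega)
      have hlt := hc k h2 hk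
      have hcont : ContinuousOn (fun x => (-1) ^ k * P.eval x) (Set.Icc (c k) (c (k + 1))) := by
        fun_prop
      have := intermediate_value_Ioo' hlt.le hcont
      have h0 : (0 : ℝ) ∈ Set.Ioo ((-1) ^ k * P.eval (c (k + 1))) ((-1) ^ k * P.eval (c k)) := by
        refine ⟨?_, s1⟩
        rw [pow_succ] at s2
        linarith
      obtain ⟨r, hr, hr0⟩ := this h0
      refine ⟨r, fun _ _ => ⟨hr.1, hr.2, ?_⟩⟩
      have h1 : ((-1 : ℝ) ^ k) ≠ 0 := by positivity
      simpa [h1] using hr0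
    · exact ⟨0, fun a b => absurd ⟨a, b⟩ h⟩
  choose r hr using hex
  have hmono : ∀ k, 2 ≤ k → k ≤ n → ∀ l, k ≤ l → l ≤ n → c k ≤ c l := by
    intro k h2 hk l hl
    induction l, hl using Nat.le_induction with
    | base => intro _; exact le_rfl
    | succ l hl ih => intro hln; exact (ih (by omega)).trans (hc l (by omega) (by omega)).le
  have hrpos : ∀ k ∈ Finset.Ico 2 n, 0 < r k := by
    intro k hk
    rw [Finset.mem_Ico] at hk
    exact (hc0 k hk.1 hk.2.le).trans (hr k hk.1 hk.2).1
  have hlt : ∀ k l, 2 ≤ k → k < l → l < n → r k < r l := by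
    intro k l h2 hkl hln
    exact ((hr k h2 (by omega)).2.1.trans_le (hmono (k + 1) (by omega) (by omega) l hkl hln.le)).trans
      (hr l (by omega) hln).1
  have hinj : Set.InjOn r (Finset.Ico 2 n) := by
    intro k hk l hl h
    simp only [Finset.coe_Ico, Set.mem_Ico] at hk hl
    rcases lt_trichotomy k l with h1 | h1 | h1
    · exact absurd h (hlt k l hk.1 h1 hl.2).ne
    · exact h1
    · exact absurd h (hlt l k hl.1 h1 hk.2).ne'
  have hdvd : (∏ k ∈ Finset.Ico 2 n, (1 - C (r k)⁻¹ * X)) ∣ P := by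
    apply Finset.prod_dvd_of_coprime
    · intro k hk l hl hkl
      have hne : r k ≠ r l := fun h => hkl (hinj hk hl h)
      have e : ∀ k ∈ Finset.Ico 2 n, (1 - C (r k)⁻¹ * X : ℝ[X]) = C (-(r k)⁻¹) * (X - C (r k)) := by
        intro k hk
        rw [mul_sub, ← C_mul, neg_mul, inv_mul_cancel₀ (hrpos k hk).ne']
        simp; ring
      change IsCoprime (1 - C (r k)⁻¹ * X : ℝ[X]) (1 - C (r l)⁻¹ * X : ℝ[X])
      rw [e k hk, e l hl]
      have u : ∀ k ∈ Finset.Ico 2 n, IsUnit (C (-(r k)⁻¹) : ℝ[X]) := fun k hk =>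
        isUnit_C.mpr (isUnit_iff_ne_zero.mpr (neg_ne_zero.mpr (inv_ne_zero (hrpos k hk).ne')))
      rw [isCoprime_mul_unit_left_left (u k hk), isCoprime_mul_unit_left_right (u l hl)]
      exact isCoprime_X_sub_C_of_isUnit_sub (isUnit_iff_ne_zero.mpr (sub_ne_zero.mpr hne))
    · intro k hk
      have h1 : (X - C (r k)) ∣ P := by
        rw [dvd_iff_isRoot]
        rw [Finset.mem_Ico] at hk
        exact (hr k hk.1 hk.2).2.2
      have e : (X - C (r k) : ℝ[X]) = (1 - C (r k)⁻¹ * X) * C (-(r k)) := by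
        have : C (r k)⁻¹ * C (r k) = (1 : ℝ[X]) := by
          rw [← C_mul, inv_mul_cancel₀ (hrpos k hk).ne', C_1]
        simp only [map_neg]
        linear_combination (-X) * this
      exact (Dvd.intro _ e.symm).trans h1
  obtain ⟨g, hg⟩ := hdvd
  refine ⟨fun k => (r k)⁻¹, g, ?_, ?_, hg⟩
  · intro k hk
    refine ⟨inv_pos.mpr (hrpos k hk), ?_⟩
    rw [Finset.mem_Ico] at hk
    rw [one_div]
    exact inv_anti₀ (hc0 k hk.1 hk.2.le) (hr k hk.1 hk.2).1.le
  · have hP0 : P ≠ 0 := by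
      intro h
      have := hs 2 le_rfl (by omega)
      simp [h] at this
    have hg0 : g ≠ 0 := by rintro rfl; simp at hg; exact hP0 hg
    have hne : ∀ k ∈ Finset.Ico 2 n, (1 - C (r k)⁻¹ * X : ℝ[X]) ≠ 0 := by
      intro k hk h
      have := congrArg (fun p => p.coeff 0) h
      simp at this
    have hd1 : ∀ k ∈ Finset.Ico 2 n, (1 - C (r k)⁻¹ * X : ℝ[X]).natDegree = 1 := by
      intro k hk
      have : (1 - C (r k)⁻¹ * X : ℝ[X]) = C (-(r k)⁻¹) * X + C 1 := by simp; ring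
      rw [this]
      exact natDegree_linear (neg_ne_zero.mpr (inv_ne_zero (hrpos k hk).ne'))
    have hd := natDegree_mul (Finset.prod_ne_zero_iff.mpr hne) hg0
    rw [← hg, natDegree_prod _ _ hne, Finset.sum_congr rfl hd1] at hd
    simp at hd
    omega

open Polynomial in
lemma lp_factor (n : ℕ) (hn : 3 ≤ n) (b Q : ℕ → ℝ)
    (hpos : ∀ j ≤ n, 0 < b j) (hzero : ∀ j, n < j → b j = 0)
    (hQ : ∀ j, j + 2 ≤ n → b (j + 1) ^ 2 = Q (j + 2) * (b j * b (j + 2)))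
    (hQ3 : ∀ j, 2 ≤ j → j ≤ n → 3 ≤ Q j)
    (hQm : ∀ j, 2 ≤ j → j + 1 ≤ n → Q j ≤ Q (j + 1))
    (H : ∀ m, m + 3 ≤ n → 4 ≤ Q (m + 3) ∨ (m + 4 ≤ n ∧ Q (m + 3) < 4 ∧
      (0.525 * Q (m + 4) ≤ Q (m + 2) ∨ 3.4303 ≤ Q (m + 3)))) :
    ∃ y : ℕ → ℝ, ∃ β γ : ℝ, (∀ k ∈ Finset.Ico 2 n, 0 < y k) ∧
      (b 1 / b 2) * ∑ k ∈ Finset.Ico 2 n, y k ≤ 0.8824 ∧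
      β = b 1 - b 0 * ∑ k ∈ Finset.Ico 2 n, y k ∧
      |γ| ≤ b 2 + b 1 * (∑ k ∈ Finset.Ico 2 n, y k) + b 0 * (∑ k ∈ Finset.Ico 2 n, y k) ^ 2 * 2 ∧
      ∀ z : ℂ, ∑ j ∈ Finset.range (n + 1), (b j : ℂ) * (-z) ^ j =
        ((b 0 : ℂ) - β * z + γ * z ^ 2) * ∏ k ∈ Finset.Ico 2 n, (1 - (y k : ℂ) * z) := by
  set P : ℝ[X] := ∑ j ∈ Finset.range (n + 1), C ((-1) ^ j * b j) * X ^ j with hP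
  have hcoeff : ∀ i, i ≤ n → P.coeff i = (-1) ^ i * b i := by
    intro i hi
    rw [hP, finsetSum_coeff]
    simp only [coeff_C_mul_X_pow]
    rw [Finset.sum_ite_eq]
    simp [Nat.lt_succ_of_le hi]
  have hdeg : P.natDegree ≤ n := by
    apply natDegree_sum_le_of_forall_le
    intro i hi
    refine (natDegree_C_mul_X_pow_le _ _).trans ?_
    have := Finset.mem_range.mp hi
    omega
  have heval : ∀ x, P.eval x = ∑ j ∈ Finset.range (n + 1), (-1) ^ j * (b j * x ^ j) := by
    intro x
    rw [hP, eval_finsetSum]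
    apply Finset.sum_congr rfl
    intro j _
    simp; ring
  set ρ : ℕ → ℝ := fun k => Real.sqrt (b (k - 1) / b (k + 1)) with hρ
  have hρ0 : ∀ k, 2 ≤ k → k < n → 0 < ρ k := fun k h2 hk =>
    Real.sqrt_pos.mpr (div_pos (hpos _ (by omega)) (hpos _ (by omega)))
  have hρsq : ∀ k, 2 ≤ k → k < n → ρ k ^ 2 = b (k - 1) / b (k + 1) := fun k h2 hk =>
    Real.sq_sqrt (div_pos (hpos _ (by omega)) (hpos _ (by omega))).le
  have hρs : ∀ k, 2 ≤ k → k < n → 0 < (-1) ^ k * P.eval (ρ k) := by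
    intro k h2 hk
    obtain ⟨m, rfl⟩ : ∃ m, k = m + 2 := ⟨k - 2, by omega⟩
    have p := hρ0 _ h2 hk
    have sq := hρsq _ h2 hk
    rw [show m + 2 - 1 = m + 1 by omega, show m + 2 + 1 = m + 3 by omega] at sq
    set x := ρ (m + 2) with hx
    have key := lp_sign n m (fun j => b j * x ^ j) Q (by omega)
      (fun j hj => mul_pos (hpos j hj) (pow_pos p j))
      (fun j hj => by simp [hzero j hj])
      (fun j hj => by
        have := hQ j hj
        rw [mul_pow, this]; ring)
      hQ3 hQm (by
        have h3 := hpos (m + 3) (by omega)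
        have : b (m + 1) = b (m + 3) * x ^ 2 := by rw [sq]; field_simp
        rw [this]; ring) (H m (by omega))
    rw [heval, Finset.mul_sum]
    refine key.trans_eq (Finset.sum_congr rfl fun j _ => ?_)
    rw [pow_add]; ring
  have hρ3 : ∀ k, 2 ≤ k → k + 1 < n → 3 * ρ k ≤ ρ (k + 1) := by
    intro k h2 hk
    obtain ⟨m, rfl⟩ : ∃ m, k = m + 2 := ⟨k - 2, by omega⟩
    have s1 := hρsq (m + 2) h2 (by omega)
    have s2 := hρsq (m + 2 + 1) (by omega) hk
    rw [show m + 2 - 1 = m + 1 by omega, show m + 2 + 1 = m + 3 by omega] at s1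
    rw [show m + 2 + 1 - 1 = m + 2 by omega, show m + 2 + 1 + 1 = m + 4 by omega] at s2
    have p1 := hpos (m + 1) (by omega)
    have p2 := hpos (m + 2) (by omega)
    have p3 := hpos (m + 3) (by omega)
    have p4 := hpos (m + 4) (by omega)
    have r1 := hQ (m + 1) (by omega)
    have r2 := hQ (m + 2) (by omega)
    have g1 := hQ3 (m + 3) (by omega) (by omega)
    have g2 := hQ3 (m + 4) (by omega) (by omega)
    rw [show m + 1 + 1 = m + 2 by ring, show m + 1 + 2 = m + 3 by ring] at r1
    rw [show m + 2 + 1 = m + 3 by ring, show m + 2 + 2 = m + 4 by ring] at r2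
    have e1 : 3 * (b (m + 1) * b (m + 3)) ≤ b (m + 2) ^ 2 := by
      rw [r1]; exact mul_le_mul_of_nonneg_right g1 (by positivity)
    have e2 : 3 * (b (m + 2) * b (m + 4)) ≤ b (m + 3) ^ 2 := by
      rw [r2]; exact mul_le_mul_of_nonneg_right g2 (by positivity)
    have e3 : 9 * (b (m + 1) * b (m + 4)) ≤ b (m + 2) * b (m + 3) := by
      have := mul_le_mul e1 e2 (by positivity) (by positivity)
      have h : (b (m + 2) * b (m + 3)) * (9 * (b (m + 1) * b (m + 4))) ≤
          (b (m + 2) * b (m + 3)) * (b (m + 2) * b (m + 3)) := by nlinarith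
      exact le_of_mul_le_mul_left h (by positivity)
    apply le_of_sq_le_sq _ (hρ0 (m + 2 + 1) (by omega) hk).le
    rw [mul_pow, s1, s2, ← mul_div_assoc, div_le_div_iff₀ p3 p4]
    nlinarith
  -- the last point
  obtain ⟨M, hM1, hM2⟩ : ∃ M, ρ (n - 1) < M ∧ 0 < (-1) ^ n * P.eval M := by
    have hPn : P.coeff n = (-1) ^ n * b n := hcoeff n le_rfl
    have hbn := hpos n le_rfl
    have hdn : P.natDegree = n := le_antisymm hdeg (le_natDegree_of_ne_zero (by rw [hPn]; positivity))
    have h1 : (-1 : ℝ) ^ n ≠ 0 := by positivity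
    have hsq : (-1 : ℝ) ^ n * (-1) ^ n = 1 := by rw [← mul_pow]; norm_num
    have hd2 : (C ((-1 : ℝ) ^ n) * P).natDegree = n := by rw [natDegree_C_mul h1, hdn]
    have hlc : (C ((-1 : ℝ) ^ n) * P).leadingCoeff = b n := by
      rw [leadingCoeff, hd2, coeff_C_mul, hPn, ← mul_assoc, hsq, one_mul]
    have := tendsto_atTop_of_leadingCoeff_nonneg (C ((-1 : ℝ) ^ n) * P)
      (by rw [← natDegree_pos_iff_degree_pos, hd2]; omega) (by rw [hlc]; exact hbn.le)
    obtain ⟨M, h2, h3⟩ := ((this.eventually_gt_atTop 0).and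
      (Filter.eventually_gt_atTop (ρ (n - 1)))).exists
    exact ⟨M, h3, by simpa using h2⟩
  set c : ℕ → ℝ := fun k => if k < n then ρ k else M with hc
  have hcl : ∀ k, k < n → c k = ρ k := fun k hk => by simp [hc, hk]
  have hcn : c n = M := by simp [hc]
  obtain ⟨y, g, hy, hg2, hPg⟩ := lp_roots P n hn hdeg c
    (by
      intro k h2 hk
      rcases hk.lt_or_eq with h | h
      · rw [hcl k h]; exact hρ0 k h2 h
      · rw [h, hcn]; exact (hρ0 (n - 1) (by omega) (by omega)).trans hM1)
    (by
      intro k h2 hk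
      rw [hcl k hk]
      rcases (Nat.succ_le_of_lt hk).lt_or_eq with h | h
      · rw [hcl (k + 1) h]
        have := hρ3 k h2 h
        have := hρ0 k h2 hk
        linarith
      · rw [show k + 1 = n from h, hcn, show k = n - 1 by omega]; exact hM1)
    (by
      intro k h2 hk
      rcases hk.lt_or_eq with h | h
      · rw [hcl k h]; exact hρs k h2 h
      · rw [h, hcn]; exact hM2)
  have hynn : ∀ k ∈ Finset.Ico 2 n, 0 ≤ y k := fun k hk => (hy k hk).1.le
  set σ := ∑ k ∈ Finset.Ico 2 n, y k with hσ
  obtain ⟨c0, c1, c2, c2'⟩ := lp_prod_coeff (Finset.Ico 2 n) y hynn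
  rw [← hσ] at c1 c2'
  set R := ∏ k ∈ Finset.Ico 2 n, (1 - C (y k) * X : ℝ[X]) with hR
  have hσ0 : 0 ≤ σ := Finset.sum_nonneg hynn
  -- compare coefficients
  have gform : g = C (g.coeff 0) + C (g.coeff 1) * X + C (g.coeff 2) * X ^ 2 := by
    conv_lhs => rw [as_sum_range_C_mul_X_pow' g (Nat.lt_succ_of_le hg2)]
    simp [Finset.sum_range_succ]
  have k0 : g.coeff 0 = b 0 := by
    have := hcoeff 0 (by omega)
    rw [hPg, mul_coeff_zero, c0] at this
    simpa using this
  have k1 : g.coeff 1 = -(b 1 - b 0 * σ) := by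
    have := hcoeff 1 (by omega)
    rw [hPg, coeff_mul, Finset.Nat.antidiagonal_succ] at this
    simp [c0, c1, k0] at this
    linarith
  have k2 : g.coeff 2 = b 2 - (b 1 - b 0 * σ) * σ - R.coeff 2 * b 0 := by
    have := hcoeff 2 (by omega)
    rw [hPg, coeff_mul, show Finset.HasAntidiagonal.antidiagonal 2 = ({(0, 2), (1, 1), (2, 0)} : Finset (ℕ × ℕ)) from rfl] at this
    simp [c0, c1, k0, k1] at this
    linarith
  refine ⟨y, b 1 - b 0 * σ, g.coeff 2, fun k hk => (hy k hk).1, ?_, rfl, ?_, ?_⟩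
  · -- the sum bound
    have b1 := hpos 1 (by omega)
    have b2 := hpos 2 (by omega)
    have b3 := hpos 3 (by omega)
    have hgeo : ∀ m, m + 2 < n → 3 ^ m * ρ 2 ≤ ρ (m + 2) := by
      intro m
      induction m with
      | zero => intro _; simp
      | succ m ih =>
        intro h
        have h1 := ih (by omega)
        have h2 := hρ3 (m + 2) (by omega) (by omega)
        rw [show m + 1 + 2 = m + 2 + 1 by ring, pow_succ]
        linarith
    have hρ2 := hρ0 2 le_rfl (by omega)
    have hs1 : σ ≤ ∑ k ∈ Finset.range (n - 2), (1 / ρ 2) * (1 / 3) ^ k := by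
      rw [hσ, Finset.sum_Ico_eq_sum_range]
      apply Finset.sum_le_sum
      intro k hk
      have hk' : k + 2 < n := by have := Finset.mem_range.mp hk; omega
      have h1 := (hy (2 + k) (Finset.mem_Ico.mpr ⟨by omega, by omega⟩)).2
      rw [add_comm 2 k, hcl _ hk'] at h1
      rw [add_comm 2 k]
      refine h1.trans ?_
      rw [one_div_pow, show 1 / ρ 2 * (1 / 3 ^ k) = 1 / (3 ^ k * ρ 2) by field_simp]
      exact one_div_le_one_div_of_le (by positivity) (hgeo k hk')
    have hs2 : ∑ k ∈ Finset.range (n - 2), (1 / ρ 2) * (1 / 3 : ℝ) ^ k ≤ 1 / ρ 2 * (3 / 2) := by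
      rw [← Finset.mul_sum]
      apply mul_le_mul_of_nonneg_left _ (by positivity)
      rw [geom_sum_eq (by norm_num)]
      have : (0 : ℝ) < (1 / 3) ^ (n - 2) := by positivity
      rw [div_le_iff_of_neg (by norm_num)]
      linarith
    have hsq := hρsq 2 le_rfl (by omega)
    norm_num at hsq
    have r := hQ 1 (by omega)
    have g3 := hQ3 3 (by omega) (by omega)
    norm_num at r
    have e1 : 3 * (b 1 * b 3) ≤ b 2 ^ 2 := by
      rw [r]; exact mul_le_mul_of_nonneg_right g3 (by positivity)
    have e2 : 1.7 * (b 1 / b 2) ≤ ρ 2 := by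
      apply le_of_sq_le_sq _ hρ2.le
      rw [hsq, mul_pow, div_pow, ← mul_div_assoc, div_le_div_iff₀ (by positivity) b3]
      nlinarith [mul_le_mul_of_nonneg_left e1 b1.le, mul_pos b1 (mul_pos b1 b3)]
    have hA : 0 < b 1 / b 2 := by positivity
    have e3 : (b 1 / b 2) * (1 / ρ 2 * (3 / 2)) ≤ 0.8824 := by
      rw [show (b 1 / b 2) * (1 / ρ 2 * (3 / 2)) = (b 1 / b 2 * (3 / 2)) / ρ 2 by ring,
        div_le_iff₀ hρ2]
      nlinarith
    exact (mul_le_mul_of_nonneg_left (hs1.trans hs2) hA.le).trans e3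
  · rw [k2, abs_le]
    have b0 := hpos 0 (by omega)
    have b1 := hpos 1 (by omega)
    have b2 := hpos 2 (by omega)
    have e1 : 0 ≤ b 0 * R.coeff 2 := by positivity
    have e2 : b 0 * R.coeff 2 ≤ b 0 * σ ^ 2 := mul_le_mul_of_nonneg_left c2' b0.le
    have e3 : 0 ≤ b 1 * σ := by positivity
    have e4 : 0 ≤ b 0 * σ ^ 2 := by positivity
    constructor <;> nlinarith
  · intro z
    have h1 := congrArg (fun p => aeval z p) hPg
    simp only [map_mul, hR, hP, map_sum, map_prod, map_sub, map_one, aeval_C, aeval_X, map_pow] at h1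
    rw [gform] at h1
    simp only [map_mul, map_add, aeval_C, aeval_X, map_pow, k0, k1] at h1
    simp only [Complex.coe_algebraMap] at h1
    rw [mul_comm]
    convert h1 using 1
    · apply Finset.sum_congr rfl
      intro j _
      rw [neg_pow]; push_cast; ring
    · congr 1
      push_cast; ring

lemma lp_lower (z : ℂ) (hz : z.im ≠ 0) :
    ∃ K : ℝ, 0 ≤ K ∧ ∀ t : ℝ, 0 ≤ t → Real.exp (-(K * t)) ≤ ‖1 - (t : ℂ) * z‖ := by
  have hy : 0 < z.im ^ 2 := by positivity
  set m := z.re ^ 2 + z.im ^ 2 with hm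
  have hm0 : 0 < m := by positivity
  refine ⟨|z.re| * m / z.im ^ 2, by positivity, fun t ht => ?_⟩
  have hD : ‖1 - (t : ℂ) * z‖ ^ 2 = (1 - t * z.re) ^ 2 + (t * z.im) ^ 2 := by
    rw [← Complex.normSq_eq_norm_sq, Complex.normSq_apply]
    simp; ring
  set D := (1 - t * z.re) ^ 2 + (t * z.im) ^ 2 with hDd
  have hDm : z.im ^ 2 ≤ D * m := by
    have : D * m - z.im ^ 2 = (t * m - z.re) ^ 2 := by rw [hDd, hm]; ring
    nlinarith [sq_nonneg (t * m - z.re)]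
  have hD0 : 0 < D := by
    by_contra hc
    push Not at hc
    nlinarith
  have h1 : 1 - D ≤ 2 * |z.re| * t := by
    have : z.re * t ≤ |z.re| * t := mul_le_mul_of_nonneg_right (le_abs_self _) ht
    nlinarith [sq_nonneg (t * z.re), sq_nonneg (t * z.im)]
  set E := 2 * (|z.re| * m / z.im ^ 2 * t) with hE
  have hE0 : 0 ≤ E := by positivity
  have h2 : 2 * |z.re| * t ≤ D * E := by
    have : D * E = (2 * |z.re| * t) * (D * m / z.im ^ 2) := by rw [hE]; field_simp
    rw [this]
    apply le_mul_of_one_le_right (by positivity)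
    rwa [one_le_div hy]
  have h3 : 1 ≤ D * Real.exp E := by
    have := Real.add_one_le_exp E
    nlinarith
  apply le_of_sq_le_sq _ (norm_nonneg _)
  rw [hD, ← Real.exp_nat_mul]
  have h4 : Real.exp (((2 : ℕ) : ℝ) * -(|z.re| * m / z.im ^ 2 * t)) * Real.exp E = 1 := by
    rw [← Real.exp_add, hE]; push_cast; rw [Real.exp_eq_one_iff]; ring
  exact le_of_mul_le_mul_right (h4.le.trans h3) (Real.exp_pos E)

lemma lp_prod_lower (z : ℂ) (hz : z.im ≠ 0) (Y : ℝ) :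
    ∃ c : ℝ, 0 < c ∧ ∀ (s : Finset ℕ) (y : ℕ → ℝ), (∀ k ∈ s, 0 ≤ y k) → ∑ k ∈ s, y k ≤ Y →
      c ≤ ‖∏ k ∈ s, (1 - (y k : ℂ) * z)‖ := by
  obtain ⟨K, hK, h⟩ := lp_lower z hz
  refine ⟨Real.exp (-(K * Y)), Real.exp_pos _, fun s y hy hs => ?_⟩
  rw [norm_prod]
  calc Real.exp (-(K * Y)) ≤ Real.exp (∑ k ∈ s, -(K * y k)) := by
        rw [Finset.sum_neg_distrib, ← Finset.mul_sum]
        exact Real.exp_le_exp.mpr (neg_le_neg (mul_le_mul_of_nonneg_left hs hK))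
    _ = ∏ k ∈ s, Real.exp (-(K * y k)) := Real.exp_sum _ _
    _ ≤ _ := Finset.prod_le_prod (fun _ _ => (Real.exp_pos _).le) (fun k hk => h _ (hy k hk))

lemma lp_prod_upper (z : ℂ) (Y : ℝ) (s : Finset ℕ) (y : ℕ → ℝ) (hy : ∀ k ∈ s, 0 ≤ y k)
    (hs : ∑ k ∈ s, y k ≤ Y) :
    ‖∏ k ∈ s, (1 - (y k : ℂ) * z)‖ ≤ Real.exp (‖z‖ * Y) := by
  rw [norm_prod]
  calc _ ≤ ∏ k ∈ s, Real.exp (‖z‖ * y k) := by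
        apply Finset.prod_le_prod (fun _ _ => norm_nonneg _)
        intro k hk
        have h1 : ‖1 - (y k : ℂ) * z‖ ≤ 1 + y k * ‖z‖ := by
          refine (norm_sub_le _ _).trans ?_
          rw [norm_one, norm_mul, Complex.norm_real, Real.norm_of_nonneg (hy k hk)]
        have := Real.add_one_le_exp (‖z‖ * y k)
        linarith
    _ = Real.exp (∑ k ∈ s, ‖z‖ * y k) := (Real.exp_sum _ _).symm
    _ ≤ _ := by
        rw [← Finset.mul_sum]
        exact Real.exp_le_exp.mpr (mul_le_mul_of_nonneg_left hs (norm_nonneg _))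

lemma lp_prod_real (s : Finset ℕ) (y : ℕ → ℝ) (hy : ∀ k ∈ s, 0 ≤ y k)
    (hs : ∑ k ∈ s, y k ≤ 1) :
    1 - ∑ k ∈ s, y k ≤ ∏ k ∈ s, (1 - y k) ∧ ∏ k ∈ s, (1 - y k) ≤ 1 := by
  induction s using Finset.induction_on with
  | empty => simp
  | insert a s ha ih =>
    rw [Finset.sum_insert ha] at hs
    rw [Finset.prod_insert ha, Finset.sum_insert ha]
    have h0 := hy a (Finset.mem_insert_self _ _)
    have hy' : ∀ k ∈ s, 0 ≤ y k := fun k hk => hy k (Finset.mem_insert_of_mem hk)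
    have h1 := Finset.sum_nonneg hy'
    obtain ⟨i1, i2⟩ := ih hy' (by linarith)
    constructor <;> nlinarith

open Filter Topology in
lemma lp_limit (f : ℂ → ℂ) (a0 a1 a2 G Y : ℝ) (h0 : 0 < a0) (h1 : 0 < a1) (h2 : 0 < a2)
    (h3 : 3 * (a0 * a2) ≤ a1 ^ 2) (F : ℕ → ℂ → ℂ)
    (hF : ∀ z, Tendsto (fun N => F N z) atTop (𝓝 (f (-z))))
    (s : ℕ → Finset ℕ) (y : ℕ → ℕ → ℝ) (β γ : ℕ → ℝ)
    (hy : ∀ N, ∀ k ∈ s N, 0 ≤ y N k) (hY : ∀ N, ∑ k ∈ s N, y N k ≤ Y)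
    (hA : (a1 / a2) * Y ≤ 0.8824) (hβ : ∀ N, β N = a1 - a0 * ∑ k ∈ s N, y N k)
    (hγ : ∀ N, |γ N| ≤ G)
    (hfac : ∀ N z, F N z = ((a0 : ℂ) - β N * z + γ N * z ^ 2) * ∏ k ∈ s N, (1 - (y N k : ℂ) * z)) :
    (∀ z : ℂ, f z = 0 → z.im = 0) ↔
      ∃ x : ℝ, x ∈ Set.Icc (-(a1 / a2)) 0 ∧ (f (x : ℂ)).re ≤ 0 := by
  have hA0 : 0 < a1 / a2 := by positivity
  have hY0 : 0 ≤ Y := (Finset.sum_nonneg (hy 0)).trans (hY 0)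
  have haY : a0 * Y ≤ 0.2942 * a1 := by
    have e1 : a1 * Y ≤ 0.8824 * a2 := by
      rw [div_mul_eq_mul_div, div_le_iff₀ h2] at hA; exact hA
    have e2 : a1 * (a0 * Y) ≤ a1 * (0.2942 * a1) := by nlinarith
    exact le_of_mul_le_mul_left e2 h1
  have hβm : ∀ N, β N ∈ Set.Icc (0.7058 * a1) a1 := by
    intro N
    rw [hβ N]
    have e1 := mul_le_mul_of_nonneg_left (hY N) h0.le
    have e2 := mul_nonneg h0.le (Finset.sum_nonneg (hy N))
    constructor <;> linarith
  have hcomp : IsCompact (Set.Icc (0.7058 * a1) a1 ×ˢ Set.Icc (-G) G) := isCompact_Icc.prod isCompact_Icc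
  obtain ⟨p, hp, φ, hφ, hlim⟩ := hcomp.tendsto_subseq (x := fun N => (β N, γ N))
    (fun N => ⟨hβm N, abs_le.mp (hγ N)⟩)
  obtain ⟨b, c⟩ := p
  have hb : b ∈ Set.Icc (0.7058 * a1) a1 := hp.1
  have hlb : Tendsto (fun N => β (φ N)) atTop (𝓝 b) := (continuous_fst.tendsto _).comp hlim
  have hlc : Tendsto (fun N => γ (φ N)) atTop (𝓝 c) := (continuous_snd.tendsto _).comp hlim
  have hFφ : ∀ z, Tendsto (fun N => F (φ N) z) atTop (𝓝 (f (-z))) := fun z =>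
    (hF z).comp hφ.tendsto_atTop
  have hqC : ∀ z : ℂ, Tendsto (fun N => (a0 : ℂ) - β (φ N) * z + γ (φ N) * z ^ 2) atTop
      (𝓝 ((a0 : ℂ) - b * z + c * z ^ 2)) := by
    intro z
    have e1 := (Complex.continuous_ofReal.tendsto b).comp hlb
    have e2 := (Complex.continuous_ofReal.tendsto c).comp hlc
    exact (tendsto_const_nhds.sub (e1.mul_const z)).add (e2.mul_const (z ^ 2))
  have hqR : ∀ x : ℝ, Tendsto (fun N => a0 - β (φ N) * x + γ (φ N) * x ^ 2) atTop
      (𝓝 (a0 - b * x + c * x ^ 2)) := by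
    intro x
    exact (tendsto_const_nhds.sub (hlb.mul_const x)).add (hlc.mul_const (x ^ 2))
  have hre : ∀ x : ℝ, ∀ N, (F N (x : ℂ)).re =
      (a0 - β N * x + γ N * x ^ 2) * ∏ k ∈ s N, (1 - y N k * x) := by
    intro x N
    rw [hfac]
    have : ((a0 : ℂ) - β N * x + γ N * x ^ 2) * ∏ k ∈ s N, (1 - (y N k : ℂ) * x) =
      (((a0 - β N * x + γ N * x ^ 2) * ∏ k ∈ s N, (1 - y N k * x) : ℝ) : ℂ) := by push_cast; rfl
    rw [this, Complex.ofReal_re]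
  have hreal : ∀ x : ℝ, 0 ≤ x → x ≤ a1 / a2 → ∀ N,
      0.1176 ≤ ∏ k ∈ s N, (1 - y N k * x) ∧ ∏ k ∈ s N, (1 - y N k * x) ≤ 1 := by
    intro x hx hxA N
    have hsum : ∑ k ∈ s N, y N k * x ≤ 0.8824 := by
      rw [← Finset.sum_mul, mul_comm]
      exact (mul_le_mul hxA (hY N) (Finset.sum_nonneg (hy N)) hA0.le).trans hA
    have := lp_prod_real (s N) (fun k => y N k * x) (fun k hk => mul_nonneg (hy N k hk) hx)
      (by linarith)
    exact ⟨by linarith [this.1], this.2⟩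
  have hFre : ∀ x : ℝ, Tendsto (fun N => (F (φ N) (x : ℂ)).re) atTop (𝓝 ((f (-(x : ℂ))).re)) :=
    fun x => (Complex.continuous_re.tendsto _).comp (hFφ x)
  constructor
  · intro hall
    have hb0 : 0 < b := by have := hb.1; nlinarith
    have hdisc : 4 * a0 * c ≤ b ^ 2 := by
      by_contra hc
      push Not at hc
      have hc0 : 0 < c := by
        by_contra h
        push Not at h
        nlinarith [mul_nonneg h0.le (neg_nonneg.mpr h), sq_nonneg b]
      set d := Real.sqrt (4 * a0 * c - b ^ 2) with hd
      have hd0 : 0 < d := Real.sqrt_pos.mpr (by linarith)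
      have hd2 : d ^ 2 = 4 * a0 * c - b ^ 2 := Real.sq_sqrt (by linarith)
      set w : ℂ := ⟨b / (2 * c), d / (2 * c)⟩ with hw
      have hqw : (a0 : ℂ) - b * w + c * w ^ 2 = 0 := by
        apply Complex.ext
        · simp [hw, sq]
          field_simp
          nlinarith
        · simp [hw, sq]
          field_simp
          ring
      have hz := hqC w
      rw [hqw] at hz
      have hz2 : Tendsto (fun N => F (φ N) w) atTop (𝓝 0) := by
        apply squeeze_zero_norm (a := fun N =>
          ‖(a0 : ℂ) - β (φ N) * w + γ (φ N) * w ^ 2‖ * Real.exp (‖w‖ * Y))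
        · intro N
          rw [hfac, norm_mul]
          exact mul_le_mul_of_nonneg_left (lp_prod_upper w Y _ _ (hy _) (hY _)) (norm_nonneg _)
        · have := hz.norm.mul_const (Real.exp (‖w‖ * Y))
          simpa using this
      have hfw := tendsto_nhds_unique (hFφ w) hz2
      have := hall _ hfw
      simp [hw] at this
      rcases this with h | h
      · linarith
      · linarith
    set x := 2 * a0 / b with hx
    have hx0 : 0 ≤ x := by positivity
    have hxA : x ≤ a1 / a2 := by
      rw [hx, div_le_div_iff₀ hb0 h2]
      have := mul_le_mul_of_nonneg_left hb.1 h1.le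
      nlinarith [mul_pos h0 h2]
    refine ⟨-x, ⟨by linarith, by linarith⟩, ?_⟩
    have hq : a0 - b * x + c * x ^ 2 ≤ 0 := by
      have : a0 - b * x + c * x ^ 2 = a0 * (4 * a0 * c - b ^ 2) / b ^ 2 := by
        rw [hx]; field_simp; ring
      rw [this]
      apply div_nonpos_of_nonpos_of_nonneg _ (by positivity)
      exact mul_nonpos_of_nonneg_of_nonpos h0.le (by linarith)
    have hmax : Tendsto (fun N => max (a0 - β (φ N) * x + γ (φ N) * x ^ 2) 0) atTop (𝓝 0) := by
      have := (hqR x).max (tendsto_const_nhds (x := (0 : ℝ)))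
      rwa [max_eq_right hq] at this
    have := le_of_tendsto_of_tendsto' (hFre x) hmax (fun N => by
      rw [hre]
      obtain ⟨l1, l2⟩ := hreal x hx0 hxA (φ N)
      rcases le_total 0 (a0 - β (φ N) * x + γ (φ N) * x ^ 2) with h | h
      · exact (mul_le_of_le_one_right h l2).trans (le_max_left _ _)
      · exact (mul_nonpos_of_nonpos_of_nonneg h (by linarith)).trans (le_max_right _ _))
    push_cast
    exact this
  · rintro ⟨x, ⟨hx1, hx2⟩, hfx⟩ z hz
    set u := -x with hu
    have hu0 : 0 ≤ u := by linarith
    have huA : u ≤ a1 / a2 := by linarith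
    have hqu : a0 - b * u + c * u ^ 2 ≤ 0 := by
      by_contra hc
      push Not at hc
      have hev := (hqR u).eventually (lt_mem_nhds hc)
      have hl := (hqR u).const_mul 0.1176
      have := le_of_tendsto_of_tendsto hl (hFre u) (hev.mono fun N hN => by
        beta_reduce
        rw [hre, mul_comm]
        exact mul_le_mul_of_nonneg_left (hreal u hu0 huA _).1 hN.le)
      have e : -(u : ℂ) = (x : ℂ) := by rw [hu]; push_cast; ring
      rw [e] at this
      nlinarith
    by_contra him
    set w := -z with hw
    have hwim : w.im ≠ 0 := by simpa [hw] using him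
    obtain ⟨κ, hκ, hlow⟩ := lp_prod_lower w hwim Y
    have hFw := (hFφ w).norm
    rw [hw, neg_neg, hz, norm_zero, ← hw] at hFw
    have hl := (hqC w).norm.mul_const κ
    have hle := le_of_tendsto_of_tendsto' hl hFw (fun N => by
      rw [hfac, norm_mul]
      exact mul_le_mul_of_nonneg_left (hlow _ _ (hy _) (hY _)) (norm_nonneg _))
    have hqw : (a0 : ℂ) - b * w + c * w ^ 2 = 0 := by
      rw [← norm_eq_zero]
      apply le_antisymm _ (norm_nonneg _)
      by_contra h
      push Not at h
      nlinarith
    have r1 := congrArg Complex.re hqw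
    have r2 := congrArg Complex.im hqw
    simp [sq] at r1 r2
    set X := w.re
    set V := w.im
    have hV2 : 0 < V ^ 2 := by positivity
    have e1 : b = 2 * c * X := by
      have : V * (b - 2 * c * X) = 0 := by linarith
      rcases mul_eq_zero.mp this with h | h
      · exact absurd h hwim
      · linarith
    have e2 : a0 = c * (X ^ 2 + V ^ 2) := by rw [e1] at r1; linarith
    have hc0 : 0 < c := by
      by_contra h
      push Not at h
      nlinarith [mul_nonneg (neg_nonneg.mpr h) (add_nonneg (sq_nonneg X) hV2.le)]
    rw [e1, e2] at hqu
    have : 0 < c * ((X - u) ^ 2 + V ^ 2) := by positivity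
    nlinarith

lemma lp_q_rel (a : ℕ → ℝ) (ha : ∀ k, 0 < a k) (j : ℕ) :
    a (j + 1) ^ 2 = secondQuotient a (j + 2) * (a j * a (j + 2)) := by
  have h1 := ha j
  have h2 := ha (j + 2)
  unfold secondQuotient
  rw [show j + 2 - 1 = j + 1 by omega, show j + 2 - 2 = j by omega]
  field_simp

/-- Coefficients of the approximating polynomials (degree `N + 1`). -/
noncomputable def lpB (a : ℕ → ℝ) (N j : ℕ) : ℝ :=
  if j ≤ N then a j else if j = N + 1 then
    a N ^ 2 / (max 4 (secondQuotient a (N + 1)) * a (N - 1)) else 0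

/-- Second quotients of the approximating polynomials. -/
noncomputable def lpQ (a : ℕ → ℝ) (N j : ℕ) : ℝ :=
  if j ≤ N then secondQuotient a j else max 4 (secondQuotient a (N + 1))

open Filter Topology in
theorem lp_main (a : ℕ → ℝ) (f : ℂ → ℂ)
    (ha : ∀ k, 0 < a k)
    (hf : ∀ z : ℂ, HasSum (fun k : ℕ => (a k : ℂ) * z ^ k) (f z))
    (hq2 : 3 ≤ secondQuotient a 2)
    (hmono : ∀ n : ℕ, 2 ≤ n → secondQuotient a n ≤ secondQuotient a (n + 1))
    (hstar : ∀ j0 : ℕ, 3 ≤ j0 → secondQuotient a j0 < 4 → 4 ≤ secondQuotient a (j0 + 1) →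
      (0.525 : ℝ) ≤ secondQuotient a (j0 - 1) / secondQuotient a (j0 + 1) ∨
        (3.4303 : ℝ) ≤ secondQuotient a j0) :
    (∀ z : ℂ, f z = 0 → z.im = 0) ↔
      ∃ x : ℝ, x ∈ Set.Icc (-(a 1 / a 2)) 0 ∧ (f (x : ℂ)).re ≤ 0 := by
  have hq3 : ∀ j, 2 ≤ j → 3 ≤ secondQuotient a j := by
    intro j hj
    induction j, hj using Nat.le_induction with
    | base => exact hq2
    | succ j hj ih => exact ih.trans (hmono j hj)
  have hrel := lp_q_rel a ha
  have hBle : ∀ N j, j ≤ N → lpB a N j = a j := fun N j h => by simp [lpB, h]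
  have hBtop : ∀ N, lpB a N (N + 1) =
      a N ^ 2 / (max 4 (secondQuotient a (N + 1)) * a (N - 1)) := fun N => by simp [lpB]
  have hQle : ∀ N j, j ≤ N → lpQ a N j = secondQuotient a j := fun N j h => by simp [lpQ, h]
  have hQtop : ∀ N, lpQ a N (N + 1) = max 4 (secondQuotient a (N + 1)) := fun N => by simp [lpQ]
  have hmax : ∀ N, 0 < max 4 (secondQuotient a (N + 1)) := fun N =>
    lt_of_lt_of_le (by norm_num) (le_max_left _ _)
  have hBtop0 : ∀ N, 0 < lpB a N (N + 1) := fun N => by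
    rw [hBtop]
    exact div_pos (pow_pos (ha N) 2) (mul_pos (hmax N) (ha _))
  have hBtople : ∀ N, 1 ≤ N → lpB a N (N + 1) ≤ a (N + 1) := by
    intro N hN
    rw [hBtop, div_le_iff₀ (mul_pos (hmax N) (ha _))]
    have := hrel (N - 1)
    rw [show N - 1 + 1 = N by omega, show N - 1 + 2 = N + 1 by omega] at this
    rw [this]
    have h1 := mul_le_mul_of_nonneg_right (le_max_right 4 (secondQuotient a (N + 1)))
      (mul_pos (ha (N - 1)) (ha (N + 1))).le
    linarith
  have hfac : ∀ i : ℕ, ∃ y : ℕ → ℝ, ∃ β γ : ℝ, (∀ k ∈ Finset.Ico 2 (i + 3 + 1), 0 < y k) ∧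
      (a 1 / a 2) * ∑ k ∈ Finset.Ico 2 (i + 3 + 1), y k ≤ 0.8824 ∧
      β = a 1 - a 0 * ∑ k ∈ Finset.Ico 2 (i + 3 + 1), y k ∧
      |γ| ≤ a 2 + a 1 * (∑ k ∈ Finset.Ico 2 (i + 3 + 1), y k) +
        a 0 * (∑ k ∈ Finset.Ico 2 (i + 3 + 1), y k) ^ 2 * 2 ∧
      ∀ z : ℂ, ∑ j ∈ Finset.range (i + 3 + 1 + 1), (lpB a (i + 3) j : ℂ) * (-z) ^ j =
        ((a 0 : ℂ) - β * z + γ * z ^ 2) * ∏ k ∈ Finset.Ico 2 (i + 3 + 1), (1 - (y k : ℂ) * z) := by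
    intro i
    obtain ⟨N, hN⟩ : ∃ N, i + 3 = N := ⟨_, rfl⟩
    rw [hN]
    have key := lp_factor (N + 1) (by omega) (lpB a N) (lpQ a N) ?_ ?_ ?_ ?_ ?_ ?_
    · rw [hBle N 0 (by omega), hBle N 1 (by omega), hBle N 2 (by omega)] at key
      exact key
    · intro j hj
      rcases hj.lt_or_eq with h | h
      · rw [hBle N j (by omega)]; exact ha j
      · rw [h]; exact hBtop0 N
    · intro j hj
      simp [lpB, show ¬ j ≤ N by omega, show j ≠ N + 1 by omega]
    · intro j hj
      rcases hj.lt_or_eq with h | h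
      · rw [hBle N _ (by omega), hBle N _ (by omega), hBle N _ (by omega), hQle N _ (by omega)]
        exact hrel j
      · rw [h, hQtop, hBtop, hBle N _ (by omega), hBle N _ (by omega), show j + 1 = N by omega,
          show N - 1 = j by omega]
        have := hmax N
        have := ha j
        field_simp
    · intro j h2 hj
      rcases hj.lt_or_eq with h | h
      · rw [hQle N j (by omega)]; exact hq3 j h2
      · rw [h, hQtop]; exact le_trans (by norm_num) (le_max_left _ _)
    · intro j h2 hj
      rw [hQle N j (by omega)]
      rcases hj.lt_or_eq with h | h
      · rw [hQle N _ (by omega)]; exact hmono j h2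
      · rw [h, hQtop, show N = j by omega]; exact (hmono j h2).trans (le_max_right _ _)
    · intro m hm
      by_cases h4 : 4 ≤ lpQ a N (m + 3)
      · exact Or.inl h4
      · right
        push Not at h4
        have hmN : m + 3 ≤ N := by
          by_contra h
          rw [show m + 3 = N + 1 by omega, hQtop] at h4
          exact absurd (le_max_left _ _) (not_le.mpr h4)
        refine ⟨by omega, h4, ?_⟩
        rw [hQle N _ hmN] at h4 ⊢
        rw [hQle N (m + 2) (by omega)]
        have g2 := hq3 (m + 2) (by omega)
        rcases lt_or_ge (secondQuotient a (m + 4)) 4 with h | h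
        · left
          have : lpQ a N (m + 4) ≤ 4 := by
            rcases le_or_gt (m + 4) N with h' | h'
            · rw [hQle N _ h']; exact h.le
            · rw [show m + 4 = N + 1 by omega, hQtop, show N + 1 = m + 4 by omega, max_eq_left h.le]
          linarith
        · have e : lpQ a N (m + 4) = secondQuotient a (m + 4) := by
            rcases le_or_gt (m + 4) N with h' | h'
            · rw [hQle N _ h']
            · rw [show m + 4 = N + 1 by omega, hQtop, show N + 1 = m + 4 by omega, max_eq_right h]
          rw [e]
          rcases hstar (m + 3) (by omega) h4 h with h' | h'
          · left
            rw [show m + 3 - 1 = m + 2 by omega, show m + 3 + 1 = m + 4 by omega,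
              le_div_iff₀ (by linarith)] at h'
            exact h'
          · exact Or.inr h'
  choose y β γ hy hA hβ hγ hF using hfac
  have a0 := ha 0
  have a1 := ha 1
  have a2 := ha 2
  have hA0 : 0 < a 1 / a 2 := by positivity
  set Y := 0.8824 / (a 1 / a 2) with hYd
  have hY : ∀ i, ∑ k ∈ Finset.Ico 2 (i + 3 + 1), y i k ≤ Y := fun i => by
    rw [hYd, le_div_iff₀ hA0, mul_comm]; exact hA i
  refine lp_limit f (a 0) (a 1) (a 2) (a 2 + a 1 * Y + a 0 * Y ^ 2 * 2) Y a0 a1 a2 ?_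
    (fun i z => ∑ j ∈ Finset.range (i + 3 + 1 + 1), (lpB a (i + 3) j : ℂ) * (-z) ^ j) ?_
    (fun i => Finset.Ico 2 (i + 3 + 1)) y β γ (fun i k hk => (hy i k hk).le) hY ?_ hβ ?_ hF
  · have := hrel 0
    norm_num at this
    rw [this]
    exact mul_le_mul_of_nonneg_right hq2 (by positivity)
  · intro z
    have hs := hf (-z)
    have t1 : Tendsto (fun i : ℕ => ∑ j ∈ Finset.range (i + 4), (a j : ℂ) * (-z) ^ j) atTop
        (𝓝 (f (-z))) := (tendsto_add_atTop_iff_nat 4).mpr hs.tendsto_sum_nat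
    have t2 : Tendsto (fun i : ℕ => (a (i + 4) : ℂ) * (-z) ^ (i + 4)) atTop (𝓝 0) :=
      (tendsto_add_atTop_iff_nat 4).mpr hs.summable.tendsto_atTop_zero
    have t3 : Tendsto (fun i : ℕ => (lpB a (i + 3) (i + 3 + 1) : ℂ) * (-z) ^ (i + 3 + 1)) atTop
        (𝓝 0) := by
      apply squeeze_zero_norm (a := fun i : ℕ => ‖(a (i + 4) : ℂ) * (-z) ^ (i + 4)‖)
      · intro i
        rw [norm_mul, norm_mul, Complex.norm_real, Complex.norm_real,
          Real.norm_of_nonneg (hBtop0 (i + 3)).le, Real.norm_of_nonneg (ha (i + 4)).le]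
        exact mul_le_mul_of_nonneg_right (hBtople (i + 3) (by omega)) (norm_nonneg _)
      · simpa using t2.norm
    have t4 := t1.add t3
    rw [add_zero] at t4
    refine t4.congr fun i => ?_
    rw [Finset.sum_range_succ _ (i + 3 + 1)]
    congr 1
    apply Finset.sum_congr rfl
    intro j hj
    rw [hBle (i + 3) j (by have := Finset.mem_range.mp hj; omega)]
  · rw [hYd, mul_div_cancel₀ _ hA0.ne']
  · intro i
    refine (hγ i).trans ?_
    have h0 := Finset.sum_nonneg (fun k hk => (hy i k hk).le)
    have h1 := hY i
    gcongr

theorem stmt1 (a : ℕ → ℝ) (f : ℂ → ℂ)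
    (ha : ∀ k, 0 < a k)
    (hf : ∀ z : ℂ, HasSum (fun k : ℕ => (a k : ℂ) * z ^ k) (f z))
    (hq2 : 3 ≤ secondQuotient a 2)
    (hmono : ∀ n : ℕ, 2 ≤ n → secondQuotient a n ≤ secondQuotient a (n + 1))
    (hstar : ∀ j0 : ℕ, 2 ≤ j0 → secondQuotient a j0 < 4 → 4 ≤ secondQuotient a (j0 + 1) →
      (0.525 : ℝ) ≤ secondQuotient a (j0 - 1) / secondQuotient a (j0 + 1) ∨
        (3.4303 : ℝ) ≤ secondQuotient a j0) :
    (∀ z : ℂ, f z = 0 → z.im = 0) ↔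
      ∃ x : ℝ, x ∈ Set.Icc (-(a 1 / a 2)) 0 ∧ (f (x : ℂ)).re ≤ 0 := by
  exact lp_main a f ha hf hq2 hmono (fun j hj => hstar j (by omega))
end

section
/- Let f(z) = \sum_{k=0}^\infty a_k z^k, with a_k > 0 for all k, be an entire function with q_2(f) \le q_3(f), and suppose f belongs to the Laguerre–Pólya class; that is, f(z) = c z^n e^{-\alpha z^2 + \beta z} \prod_k (1 - z/x_k) e^{z/x_k} for some c, \beta \in \mathbb{R}, \alpha \ge 0, nonzero reals x_k with \sum_k x_k^{-2} < \infty, and nonnegative integer n (here n = 0 since a_0 > 0). Then there exists z_0 \in [-a_1/a_2, 0] such that f(z_0) \le 0. -/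
open Filter Topology Asymptotics

lemma aux_const_zero (c : ℝ) (g : ℝ → ℝ) (hg : Tendsto g (𝓝[>] (0:ℝ)) (𝓝 0))
    (h : (fun x : ℝ => c + g x) =O[𝓝[>] (0:ℝ)] (fun x => x)) : c = 0 := by
  have h1 : Tendsto (fun x : ℝ => x) (𝓝[>] (0:ℝ)) (𝓝 0) := tendsto_nhdsWithin_of_tendsto_nhds tendsto_id
  have h2 := h.trans_tendsto h1
  have h3 : Tendsto (fun x : ℝ => c + g x) (𝓝[>] (0:ℝ)) (𝓝 (c + 0)) := tendsto_const_nhds.add hg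
  have := tendsto_nhds_unique h2 h3
  linarith

lemma aux_div (g : ℝ → ℝ) (n : ℕ)
    (h : (fun x : ℝ => x * g x) =O[𝓝[>] (0:ℝ)] (fun x => x ^ (n+1))) :
    g =O[𝓝[>] (0:ℝ)] (fun x => x ^ n) := by
  have h1 : (fun x : ℝ => x⁻¹) =O[𝓝[>] (0:ℝ)] (fun x : ℝ => x⁻¹) := isBigO_refl _ _
  have h2 := h1.mul h
  refine h2.congr' ?_ ?_
  · filter_upwards [self_mem_nhdsWithin] with x hx
    have : x ≠ 0 := ne_of_gt hx
    field_simp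
  · filter_upwards [self_mem_nhdsWithin] with x hx
    have : x ≠ 0 := ne_of_gt hx
    field_simp
    ring

lemma aux_poly (c0 c1 c2 c3 : ℝ)
    (h : (fun x : ℝ => c0 + c1 * x + c2 * x^2 + c3 * x^3) =O[𝓝[>] (0:ℝ)] (fun x => x^4)) :
    c0 = 0 ∧ c1 = 0 ∧ c2 = 0 ∧ c3 = 0 := by
  have t0 : ∀ g : ℝ → ℝ, Continuous g → g 0 = 0 → Tendsto g (𝓝[>] (0:ℝ)) (𝓝 0) := by
    intro g hg h0
    have := hg.tendsto 0
    rw [h0] at this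
    exact tendsto_nhdsWithin_of_tendsto_nhds this
  have le1 : ∀ n : ℕ, 1 ≤ n → (fun x : ℝ => x^n) =O[𝓝[>] (0:ℝ)] (fun x : ℝ => x) := by
    intro n hn
    refine IsBigO.of_bound 1 ?_
    have : Set.Ioo (0:ℝ) 1 ∈ 𝓝[>] (0:ℝ) := Ioo_mem_nhdsGT one_pos
    filter_upwards [this] with x hx
    rw [Real.norm_of_nonneg (by have := hx.1; positivity), Real.norm_of_nonneg hx.1.le, one_mul]
    exact pow_le_of_le_one hx.1.le hx.2.le (by omega)
  have h0 : c0 = 0 := by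
    refine aux_const_zero c0 (fun x => c1 * x + c2 * x^2 + c3 * x^3) (t0 _ (by fun_prop) (by simp)) ?_
    refine (h.trans (le1 4 (by norm_num))).congr_left ?_
    intro x; ring
  subst h0
  have k1 := aux_div (fun x => c1 + c2 * x + c3 * x^2) 3 (h.congr_left (fun x => by ring))
  have h1 : c1 = 0 := by
    refine aux_const_zero c1 (fun x => c2 * x + c3 * x^2) (t0 _ (by fun_prop) (by simp)) ?_
    refine (k1.trans (le1 3 (by norm_num))).congr_left ?_
    intro x; ring
  subst h1
  have k2 := aux_div (fun x => c2 + c3 * x) 2 (k1.congr_left (fun x => by ring))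
  have h2 : c2 = 0 := by
    refine aux_const_zero c2 (fun x => c3 * x) (t0 _ (by fun_prop) (by simp)) ?_
    exact (k2.trans (le1 2 (by norm_num)))
  subst h2
  have k3 := aux_div (fun x => c3) 1 (k2.congr_left (fun x => by ring))
  have h3 : c3 = 0 := by
    refine aux_const_zero c3 (fun x => 0) tendsto_const_nhds ?_
    simpa using k3
  exact ⟨rfl, rfl, rfl, h3⟩

lemma aux_coef (F H : ℝ → ℝ) (a0 a1 a2 a3 b c d : ℝ)
    (hF : (fun x => F x - (a0 + a1 * x + a2 * x^2 + a3 * x^3)) =O[𝓝[>] (0:ℝ)] (fun x => x^4))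
    (hH : (fun x => H x - (b * x + c * x^2 + d * x^3)) =O[𝓝[>] (0:ℝ)] (fun x => x^4))
    (hFH : ∀ᶠ x in 𝓝[>] (0:ℝ), F x = a0 * Real.exp (H x)) :
    a1 = a0 * b ∧ a2 = a0 * (c + b^2/2) ∧ a3 = a0 * (d + b * c + b^3/6) := by
  have t0 : ∀ g : ℝ → ℝ, Continuous g → Tendsto g (𝓝[>] (0:ℝ)) (𝓝 (g 0)) := 
    fun g hg => tendsto_nhdsWithin_of_tendsto_nhds (hg.tendsto 0)
  set G : ℝ → ℝ := fun x => b * x + c * x^2 + d * x^3 with hG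
  have hGc : Continuous G := by fun_prop
  have hG0 : Tendsto G (𝓝[>] (0:ℝ)) (𝓝 0) := by simpa [hG] using t0 G hGc
  have hx4 : Tendsto (fun x : ℝ => x^4) (𝓝[>] (0:ℝ)) (𝓝 0) := by
    have := t0 (fun x : ℝ => x^4) (by fun_prop)
    norm_num at this
    exact this
  have hH0 : Tendsto H (𝓝[>] (0:ℝ)) (𝓝 0) := by
    have := (hH.trans_tendsto hx4).add hG0
    simpa [hG] using this
  have hHx : H =O[𝓝[>] (0:ℝ)] (fun x => x) := by
    have e1 : (fun x : ℝ => x^3) =O[𝓝[>] (0:ℝ)] (fun _ => (1:ℝ)) := (t0 (fun x : ℝ => x^3) (by fun_prop)).isBigO_one ℝ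
    have e2 : (fun x : ℝ => b + c * x + d * x^2) =O[𝓝[>] (0:ℝ)] (fun _ => (1:ℝ)) := (t0 (fun x : ℝ => b + c * x + d * x^2) (by fun_prop)).isBigO_one ℝ
    have e3 := (isBigO_refl (fun x : ℝ => x) (𝓝[>] (0:ℝ))).mul e1
    have e4 := (isBigO_refl (fun x : ℝ => x) (𝓝[>] (0:ℝ))).mul e2
    have e5 := hH.trans (e3.congr (f₂ := fun x => x^4) (g₂ := fun x => x) (fun x => by ring) (fun x => by ring))
    simp only [mul_one] at e4
    exact (e5.add e4).congr (fun x => by ring) (fun x => rfl)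
  have hexp := (Real.exp_sub_sum_range_isBigO_pow 4).comp_tendsto hH0
  have hexp2 : (fun x => Real.exp (H x) - (1 + H x + H x^2/2 + H x^3/6)) =O[𝓝[>] (0:ℝ)] (fun x => x^4) := by
    refine IsBigO.trans ?_ (hHx.pow 4)
    refine hexp.congr (fun x => ?_) (fun x => rfl)
    simp [Finset.sum_range_succ, Nat.factorial]
  have m1 : (fun x => 1 + (H x + G x)/2 + (H x^2 + H x * G x + G x^2)/6) =O[𝓝[>] (0:ℝ)] (fun _ => (1:ℝ)) := by
    have := ((tendsto_const_nhds (x := (1:ℝ))).add ((hH0.add hG0).div_const 2)).add ((((hH0.pow 2).add (hH0.mul hG0)).add (hG0.pow 2)).div_const 6)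
    exact this.isBigO_one ℝ
  have m2 : (fun x : ℝ => (c^2/2 + b*d + c*d*x + d^2*x^2/2) + (3*b^2*c + 3*b^2*d*x + 3*b*c^2*x + 6*b*c*d*x^2 + 3*b*d^2*x^3
      + c^3*x^2+3*c^2*d*x^3+3*c*d^2*x^4+d^3*x^5)/6) =O[𝓝[>] (0:ℝ)] (fun _ => (1:ℝ)) :=
    (t0 _ (by fun_prop)).isBigO_one ℝ
  have n1 := hH.mul m1
  have n2 := (isBigO_refl (fun x : ℝ => x^4) (𝓝[>] (0:ℝ))).mul m2
  simp only [mul_one] at n1 n2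
  have n3 := (((n1.add n2).add hexp2).const_mul_left a0).sub hF
  have n4 := aux_poly (a0 - a0) (a1 - a0*b) (a2 - a0 * (c + b^2/2)) (a3 - a0 * (d + b * c + b^3/6)) (by
    refine n3.congr' ?_ EventuallyEq.rfl
    filter_upwards [hFH] with x hx
    rw [hx]
    simp only [hG]
    ring)
  obtain ⟨_, h1, h2, h3⟩ := n4
  exact ⟨by linarith, by linarith, by linarith⟩

lemma aux_log_hasSum {ι : Type} (g : ι → ℝ) (P : ℝ) (hg : ∀ i, 0 < g i) (hP : 0 < P)
    (h : HasProd g P) : HasSum (fun i => Real.log (g i)) (Real.log P) := by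
  unfold HasProd at h
  unfold HasSum
  have := (Real.continuousAt_log hP.ne').tendsto.comp h
  refine this.congr ?_
  intro s
  simp only [Function.comp]
  exact Real.log_prod (fun i _ => (hg i).ne')

lemma aux_term_nonpos (u : ℝ) (hu : 0 ≤ u) : Real.log (1 + u) - u ≤ 0 := by
  have := Real.log_le_sub_one_of_pos (show 0 < 1 + u by linarith)
  linarith

lemma aux_log_taylor (u : ℝ) (hu : 0 ≤ u) (hu2 : u ≤ 1/2) :
    |(Real.log (1 + u) - u) - (-(u^2/2) + u^3/3)| ≤ 2 * u^4 := by
  have h := Real.abs_log_sub_add_sum_range_le (x := -u) (by rw [abs_neg, abs_of_nonneg hu]; linarith) 3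
  rw [abs_neg, abs_of_nonneg hu] at h
  have h2 : u^(3+1) / (1 - u) ≤ 2 * u^4 := by
    rw [div_le_iff₀ (by linarith)]
    have : 0 ≤ u^4 := by positivity
    norm_num
    nlinarith
  refine le_trans (le_of_eq ?_) (h.trans h2)
  congr 1
  simp [Finset.sum_range_succ]
  ring

lemma aux_core {ι : Type} (t : ι → ℝ) (ht : ∀ i, 0 < t i) (a : ℕ → ℝ) (ha : ∀ k, 0 < a k)
    (F : ℝ → ℝ) (hF : ∀ x, 0 ≤ x → HasSum (fun k => a k * x^k) (F x))
    (α β : ℝ) (hα : 0 ≤ α)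
    (hs : ∀ x, 0 ≤ x → HasSum (fun i => Real.log (1 + x * t i) - x * t i)
      (Real.log (F x / a 0) + α * x^2 - β * x)) :
    Summable t ∧ ∑' i, t i ≤ β ∧ a 1 = a 0 * β ∧ a 2 = a 0 * (-(∑' i, t i^2)/2 + β^2/2) ∧
      a 3 = a 0 * ((∑' i, t i^3)/3 + β * (-(∑' i, t i^2)/2) + β^3/6) := by
  have ha0 := ha 0
  have hF0 : ∀ x, 0 ≤ x → a 0 ≤ F x := by
    intro x hx
    have := (hF x hx).summable.le_tsum 0 (fun k _ => mul_nonneg (ha k).le (pow_nonneg hx k))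
    rw [(hF x hx).tsum_eq] at this
    simpa using this
  have hL0 : ∀ x, 0 ≤ x → 0 ≤ Real.log (F x / a 0) := by
    intro x hx
    apply Real.log_nonneg
    rw [le_div_iff₀ ha0]
    linarith [hF0 x hx]
  have htn : ∀ x, 0 ≤ x → ∀ i, Real.log (1 + x * t i) - x * t i ≤ 0 := fun x hx i =>
    aux_term_nonpos _ (mul_nonneg hx (ht i).le)
  have hα0 : α = 0 := by
    have key : ∀ x, 0 < x → α * x ≤ β := by
      intro x hx
      have h1 := hasSum_le (htn x hx.le) (hs x hx.le) hasSum_zero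
      have h2 := hL0 x hx.le
      by_contra hc
      push Not at hc
      nlinarith
    by_contra hne
    have hpos : 0 < α := lt_of_le_of_ne hα (Ne.symm hne)
    have h1 := key ((|β| + 1)/α) (by positivity)
    have : α * ((|β| + 1)/α) = |β| + 1 := by field_simp
    have h2 := le_abs_self β
    linarith
  subst hα0
  have hfin : ∀ s : Finset ι, ∑ i ∈ s, t i ≤ β := by
    intro s
    have key : ∀ x, 0 < x → ∑ i ∈ s, t i ≤ β + ∑ i ∈ s, Real.log (1 + x * t i) / x := by
      intro x hx
      have h1 := sum_le_hasSum s (f := fun i => -(Real.log (1 + x * t i) - x * t i))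
        (fun i _ => by linarith [htn x hx.le i]) (hs x hx.le).neg
      have h2 := hL0 x hx.le
      have h3 : ∑ i ∈ s, (-(Real.log (1 + x * t i) - x * t i)) = x * (∑ i ∈ s, t i - ∑ i ∈ s, Real.log (1 + x * t i) / x) := by
        rw [← Finset.sum_sub_distrib, Finset.mul_sum]
        refine Finset.sum_congr rfl (fun i _ => ?_)
        field_simp
        ring
      rw [h3] at h1
      by_contra hc
      push Not at hc
      nlinarith
    have lim : ∀ i, Tendsto (fun x : ℝ => Real.log (1 + x * t i) / x) atTop (𝓝 0) := by
      intro i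
      have l1 : Tendsto (fun x : ℝ => 1 + x * t i) atTop atTop :=
        tendsto_atTop_add_const_left _ _ (tendsto_id.atTop_mul_const (ht i))
      have l2 : (fun x : ℝ => Real.log (1 + x * t i)) =o[atTop] (fun x : ℝ => 1 + x * t i) :=
        Real.isLittleO_log_id_atTop.comp_tendsto l1
      have l3 : (fun x : ℝ => 1 + x * t i) =O[atTop] (fun x : ℝ => x) := by
        refine IsBigO.of_bound (1 + t i) ?_
        filter_upwards [eventually_ge_atTop 1] with x hx
        have := ht i
        have hx0 : 0 ≤ x := by linarith
        rw [Real.norm_of_nonneg (by positivity), Real.norm_of_nonneg hx0]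
        nlinarith
      exact (l2.trans_isBigO l3).tendsto_div_nhds_zero
    have lim2 : Tendsto (fun x : ℝ => β + ∑ i ∈ s, Real.log (1 + x * t i) / x) atTop (𝓝 (β + ∑ i ∈ s, (0:ℝ))) :=
      tendsto_const_nhds.add (tendsto_finsetSum _ (fun i _ => lim i))
    have := ge_of_tendsto lim2 (by filter_upwards [eventually_gt_atTop 0] with x hx using key x hx)
    simpa using this
  have hst : Summable t := summable_of_sum_le (fun i => (ht i).le) hfin
  have hle : ∑' i, t i ≤ β := hst.tsum_le_of_sum_le hfin
  have htb : ∀ i, t i ≤ β := fun i => by simpa using hfin {i}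
  have hpow : ∀ n : ℕ, Summable (fun i => t i ^ (n+1)) := by
    intro n
    refine Summable.of_nonneg_of_le (fun i => pow_nonneg (ht i).le _) (fun i => ?_) (hst.mul_left (β^n))
    rw [pow_succ]
    exact mul_le_mul_of_nonneg_right (pow_le_pow_left₀ (ht i).le (htb i) n) (ht i).le
  refine ⟨hst, hle, ?_⟩
  have hc := aux_coef F (fun x => Real.log (F x / a 0)) (a 0) (a 1) (a 2) (a 3) β (-(∑' i, t i^2)/2) ((∑' i, t i^3)/3)
    ?_ ?_ ?_
  · exact hc
  · refine IsBigO.of_bound (F 1) ?_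
    have : Set.Ioo (0:ℝ) 1 ∈ 𝓝[>] (0:ℝ) := Ioo_mem_nhdsGT one_pos
    filter_upwards [this] with x hx
    have hx0 := hx.1
    have h1 := (hasSum_nat_add_iff' 4).mpr (hF x hx0.le)
    have h2 := (hasSum_nat_add_iff' 4).mpr (hF 1 zero_le_one)
    have h3 := hasSum_le (fun k => ?_) h1 (h2.mul_left (x^4))
    · have h4 := h1.nonneg (fun k => mul_nonneg (ha _).le (pow_nonneg hx0.le _))
      simp [Finset.sum_range_succ] at h3 h4
      rw [Real.norm_of_nonneg (by linarith), Real.norm_of_nonneg (by positivity)]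
      have := mul_pos (pow_pos hx0 4) (add_pos (add_pos (add_pos (ha 0) (ha 1)) (ha 2)) (ha 3))
      linarith
    · simp only [one_pow, mul_one]
      rw [pow_add]
      have : x^k ≤ 1 := pow_le_one₀ hx0.le hx.2.le
      have h5 : 0 ≤ a (k+4) * x^4 := mul_nonneg (ha _).le (by positivity)
      nlinarith
  · by_cases hemp : IsEmpty ι
    · refine IsBigO.of_bound 1 ?_
      filter_upwards [self_mem_nhdsWithin] with x hx
      have hx0 : (0:ℝ) < x := hx
      have h1 := (hs x hx0.le).unique hasSum_empty
      have : Real.log (F x / a 0) = β * x := by linarith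
      simp [this]
    rw [not_isEmpty_iff] at hemp
    obtain ⟨i0⟩ := hemp
    have hβ : 0 < β := lt_of_lt_of_le (ht i0) (htb i0)
    refine IsBigO.of_bound (2 * ∑' i, t i^4) ?_
    have : Set.Ioo (0:ℝ) (1/(2*β)) ∈ 𝓝[>] (0:ℝ) := Ioo_mem_nhdsGT (by positivity)
    filter_upwards [this] with x hx
    have hx0 := hx.1
    have h1 := (hs x hx0.le).sub ((((hpow 1).hasSum.div_const 2).mul_left (-x^2)).add (((hpow 2).hasSum.div_const 3).mul_left (x^3)))
    have h2 := ((hpow 3).hasSum.mul_left (2 * x^4))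
    have hb : ∀ i, |(Real.log (1 + x * t i) - x * t i) - (-x^2 * (t i^(1+1)/2) + x^3 * (t i^(2+1)/3))| ≤ 2 * x^4 * t i^(3+1) := by
      intro i
      have hxi : x * t i ≤ 1/2 := by
        have := hx.2
        rw [lt_div_iff₀ (by positivity)] at this
        have := mul_le_mul_of_nonneg_left (htb i) hx0.le
        linarith
      have := aux_log_taylor (x * t i) (mul_nonneg hx0.le (ht i).le) hxi
      refine le_trans (le_of_eq ?_) (this.trans (le_of_eq ?_))
      · congr 1; ring
      · ring
    have u := hasSum_le (fun i => (abs_le.mp (hb i)).2) h1 h2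
    have l := hasSum_le (fun i => (abs_le.mp (hb i)).1) h2.neg h1
    rw [Real.norm_eq_abs, Real.norm_of_nonneg (by positivity), abs_le]
    norm_num at u l ⊢
    constructor <;> linarith
  · filter_upwards [self_mem_nhdsWithin] with x hx
    have hx0 : (0:ℝ) < x := hx
    have := hF0 x hx0.le
    rw [Real.exp_log (div_pos (by linarith) ha0)]
    field_simp

lemma aux_final {ι : Type} (t : ι → ℝ) (ht : ∀ i, 0 < t i) (a0 a1 a2 a3 β : ℝ)
    (h0 : 0 < a0) (h1 : 0 < a1) (h2 : 0 < a2) (h3 : 0 < a3)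
    (hst : Summable t) (hle : ∑' i, t i ≤ β) (e1 : a1 = a0 * β)
    (e2 : a2 = a0 * (-(∑' i, t i^2)/2 + β^2/2))
    (e3 : a3 = a0 * ((∑' i, t i^3)/3 + β * (-(∑' i, t i^2)/2) + β^3/6))
    (hq : a1^3 * a3 ≤ a0 * a2^3) (hlt : ∀ i, t i < a2 / a1) : False := by
  have hβ : 0 < β := by
    rw [e1] at h1
    exact pos_of_mul_pos_right h1 h0.le
  have htb : ∀ i, t i ≤ β := fun i => (hst.le_tsum i (fun j _ => (ht j).le)).trans hle
  have hpow : ∀ n : ℕ, Summable (fun i => t i ^ (n+1)) := by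
    intro n
    refine Summable.of_nonneg_of_le (fun i => pow_nonneg (ht i).le _) (fun i => ?_) (hst.mul_left (β^n))
    rw [pow_succ]
    exact mul_le_mul_of_nonneg_right (pow_le_pow_left₀ (ht i).le (htb i) n) (ht i).le
  have s2 : Summable (fun i => t i^2) := hpow 1
  have s3 : Summable (fun i => t i^3) := hpow 2
  set p := ∑' i, t i^2 with hp
  set r := ∑' i, t i^3 with hr
  set E := a2 / a1 with hE
  have hE' : 2 * β * E = β^2 - p := by
    rw [hE, e1, e2]
    field_simp
    ring
  -- Cauchy-Schwarz
  have cs : p^2 ≤ β * r := by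
    have hn : 0 ≤ r - 2 * (p/β) * p + (p/β)^2 * ∑' i, t i := by
      have hh := (s3.hasSum.sub (s2.hasSum.mul_left (2 * (p/β)))).add (hst.hasSum.mul_left ((p/β)^2))
      refine hh.nonneg (fun i => ?_)
      have : t i ^ 3 - 2 * (p / β) * t i ^ 2 + (p / β) ^ 2 * t i = t i * (t i - p/β)^2 := by ring
      rw [this]
      exact mul_nonneg (ht i).le (sq_nonneg _)
    have h5 : (p/β)^2 * ∑' i, t i ≤ (p/β)^2 * β := mul_le_mul_of_nonneg_left hle (sq_nonneg _)
    have h6 : 0 ≤ r - p^2/β := by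
      have : r - p^2/β = r - 2 * (p/β) * p + (p/β)^2 * β := by field_simp; ring
      rw [this]; linarith
    have h7 : p^2/β ≤ r := by linarith
    rw [div_le_iff₀ hβ] at h7
    linarith
  -- lower bound on p
  have hp2 : 0 < β^2 - p := by
    rw [← hE']; have : 0 < E := div_pos h2 h1
    positivity
  have hq' : 4 * β^3 * (β^3 - 3 * β * p + 2 * r) ≤ 3 * (β^2 - p)^3 := by
    rw [e1, e2, e3] at hq
    have h4 : 0 < a0^4 := by positivity
    have : a0^4 * (4 * β^3 * (β^3 - 3 * β * p + 2 * r)) ≤ a0^4 * (3 * (β^2 - p)^3) := by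
      nlinarith
    exact le_of_mul_le_mul_left this h4
  have hlow : β^2 ≤ 3 * p := by
    have hp0 : 0 ≤ p := tsum_nonneg (fun i => sq_nonneg _)
    have k1 : 4 * β^2 * ((β^2 - p) * (β^2 - 2 * p)) ≤ 3 * (β^2 - p)^3 := by
      have : β^2 * p^2 ≤ β^2 * (β * r) := mul_le_mul_of_nonneg_left cs (sq_nonneg _)
      nlinarith
    have k2 : 4 * β^2 * (β^2 - 2 * p) ≤ 3 * (β^2 - p)^2 := by
      refine le_of_mul_le_mul_left ?_ hp2
      linarith
    have k3 : 0 ≤ (3 * p - β^2) * (p + β^2) := by nlinarith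
    have k4 : 0 < p + β^2 := by positivity
    have := nonneg_of_mul_nonneg_left k3 k4
    linarith
  have hppos : 0 < p := by nlinarith [sq_pos_of_pos hβ]
  have hne : Nonempty ι := by
    by_contra hc
    rw [not_nonempty_iff] at hc
    rw [hp, tsum_empty] at hppos
    exact lt_irrefl _ hppos
  obtain ⟨i0⟩ := hne
  have hlt2 : p < E * ∑' i, t i := by
    rw [← tsum_mul_left]
    refine Summable.tsum_lt_tsum (i := i0) (fun i => ?_) ?_ s2 (hst.mul_left E)
    · nlinarith [ht i, hlt i]
    · nlinarith [ht i0, hlt i0]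
  have hEpos : 0 < E := div_pos h2 h1
  have : E * ∑' i, t i ≤ E * β := mul_le_mul_of_nonneg_left hle hEpos.le
  linarith

theorem stmt5 (a : ℕ → ℝ) (f : ℂ → ℂ)
    (ha : ∀ k, 0 < a k)
    (hf : ∀ z : ℂ, HasSum (fun k : ℕ => (a k : ℂ) * z ^ k) (f z))
    (hq23 : secondQuotient a 2 ≤ secondQuotient a 3)
    (hLP : ∃ (c α β : ℝ) (n : ℕ) (ι : Type) (_ : Countable ι) (x : ι → ℝ),
      0 ≤ α ∧ (∀ i, x i ≠ 0) ∧ Summable (fun i => ((x i) ^ 2)⁻¹) ∧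
      (∀ z : ℂ, Multipliable (fun i => (1 - z / (x i : ℂ)) * Complex.exp (z / (x i : ℂ)))) ∧
      (∀ z : ℂ, f z = (c : ℂ) * z ^ n * Complex.exp (-(α : ℂ) * z ^ 2 + (β : ℂ) * z) *
        ∏' i, ((1 - z / (x i : ℂ)) * Complex.exp (z / (x i : ℂ))))) :
    ∃ x : ℝ, x ∈ Set.Icc (-(a 1 / a 2)) 0 ∧ (f (x : ℂ)).re ≤ 0 := by
  obtain ⟨c, α, β, n, ι, _, x, hα, hx, _, hmul, hfac⟩ := hLP
  by_contra hcon
  push Not at hcon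
  set F : ℝ → ℝ := fun y => (f (y : ℂ)).re with hFdef
  have hre : ∀ y : ℝ, HasSum (fun k => a k * y^k) (F y) := by
    intro y
    have := Complex.hasSum_re (hf y)
    refine this.congr_fun ?_
    intro k
    rw [← Complex.ofReal_pow, ← Complex.ofReal_mul, Complex.ofReal_re]
  have hfF : ∀ y : ℝ, f (y : ℂ) = (F y : ℂ) := by
    intro y
    refine (hf y).unique ?_
    have := Complex.hasSum_ofReal.mpr (hre y)
    push_cast at this
    exact this
  have hF0 : F 0 = a 0 := by
    refine (hre 0).unique ?_
    have := hasSum_single (f := fun k => a k * (0:ℝ)^k) 0 (fun k hk => by simp [hk])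
    simpa using this
  have hFpos : ∀ y, 0 ≤ y → a 0 ≤ F y := by
    intro y hy
    have := (hre y).summable.le_tsum 0 (fun k _ => mul_nonneg (ha k).le (pow_nonneg hy k))
    rw [(hre y).tsum_eq] at this
    simpa using this
  have hzero : ∀ i, F (x i) = 0 := by
    intro i
    have h1 := hfac (x i)
    have hxi : (x i : ℂ) ≠ 0 := by exact_mod_cast hx i
    rw [tprod_of_exists_eq_zero ⟨i, by simp [hxi]⟩, mul_zero] at h1
    simp [hFdef, h1]
  have hneg : ∀ i, x i < -(a 1 / a 2) := by
    intro i
    by_contra hc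
    push Not at hc
    rcases le_total (x i) 0 with h | h
    · have := hcon (x i) ⟨hc, h⟩
      have h2 := hzero i
      simp only [hFdef] at h2
      linarith
    · have := hFpos (x i) h
      have := hzero i
      linarith [ha 0]
  have h12 : 0 < a 1 / a 2 := div_pos (ha 1) (ha 2)
  have hf0 := hfac 0
  have hf00 : f 0 = (a 0 : ℂ) := by
    have := hfF 0
    rw [hF0] at this
    simpa using this
  have hn : n = 0 := by
    by_contra hn
    rw [hf00] at hf0
    simp [hn] at hf0
    exact (ha 0).ne' hf0
  subst hn
  have hc : c = a 0 := by
    rw [hf00] at hf0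
    simp at hf0
    exact_mod_cast hf0.symm
  subst hc
  have ht : ∀ i, 0 < -(x i)⁻¹ := fun i => by
    have : (x i)⁻¹ < 0 := inv_lt_zero.mpr (by linarith [hneg i])
    linarith
  have hcore := aux_core (fun i => -(x i)⁻¹) ht a ha F (fun y _ => hre y) α β hα (by
    intro y hy
    have hFy : 0 < F y := lt_of_lt_of_le (ha 0) (hFpos y hy)
    have hP := (hmul y).hasProd.norm
    have hpt : ∀ i, 0 < 1 + y * -(x i)⁻¹ := fun i => by
      have := mul_nonneg hy (ht i).le
      linarith
    have hnorm : ∀ i, ‖(1 - (y:ℂ) / (x i : ℂ)) * Complex.exp ((y:ℂ) / (x i : ℂ))‖ =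
        (1 + y * -(x i)⁻¹) * Real.exp (-(y * -(x i)⁻¹)) := by
      intro i
      have : (1 - (y:ℂ) / (x i : ℂ)) * Complex.exp ((y:ℂ) / (x i : ℂ)) =
        (((1 + y * -(x i)⁻¹) * Real.exp (-(y * -(x i)⁻¹)) : ℝ) : ℂ) := by
        push_cast
        simp only [div_eq_mul_inv]
        ring_nf
      rw [this, Complex.norm_real, Real.norm_of_nonneg]
      exact mul_nonneg (hpt i).le (Real.exp_pos _).le
    have hPv : ‖∏' i, ((1 - (y:ℂ) / (x i : ℂ)) * Complex.exp ((y:ℂ) / (x i : ℂ)))‖ =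
        F y / a 0 * Real.exp (α * y^2 - β * y) := by
      have h1 := congrArg norm (hfac y)
      rw [hfF y, norm_mul, norm_mul, norm_mul, Complex.norm_real, Complex.norm_real,
        Real.norm_of_nonneg hFy.le, Real.norm_of_nonneg (ha 0).le, Complex.norm_exp] at h1
      have h2 : (-(α:ℂ) * (y:ℂ)^2 + (β:ℂ) * (y:ℂ)).re = -(α * y^2 - β * y) := by
        have : (-(α:ℂ) * (y:ℂ)^2 + (β:ℂ) * (y:ℂ)) = ((-(α * y^2 - β * y) : ℝ) : ℂ) := by
          push_cast; ring
        rw [this, Complex.ofReal_re]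
      rw [h2, Real.exp_neg] at h1
      rw [h1]
      have := (ha 0).ne'
      have := (Real.exp_pos (α * y^2 - β * y)).ne'
      simp
      field_simp
    rw [hPv] at hP
    simp only [hnorm] at hP
    have hL := aux_log_hasSum _ _ (fun i => mul_pos (hpt i) (Real.exp_pos _))
      (mul_pos (div_pos hFy (ha 0)) (Real.exp_pos _)) hP
    rw [Real.log_mul (div_pos hFy (ha 0)).ne' (Real.exp_pos _).ne', Real.log_exp] at hL
    have e : Real.log (F y / a 0) + α * y^2 - β * y = Real.log (F y / a 0) + (α * y^2 - β * y) := by ring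
    rw [e]
    refine hL.congr_fun ?_
    intro i
    rw [Real.log_mul (hpt i).ne' (Real.exp_pos _).ne', Real.log_exp]
    ring)
  obtain ⟨hst, hle, e1, e2, e3⟩ := hcore
  refine aux_final _ ht (a 0) (a 1) (a 2) (a 3) β (ha 0) (ha 1) (ha 2) (ha 3) hst hle e1 e2 e3 ?_ ?_
  · have h0 := ha 0
    have h1 := ha 1
    have h2 := ha 2
    have h3 := ha 3
    simp only [secondQuotient] at hq23
    norm_num at hq23
    rw [div_le_div_iff₀ (by positivity) (by positivity)] at hq23
    linarith
  · intro i
    have h := hneg i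
    have h2 : a 1 / a 2 < -(x i) := by linarith
    have h3 := (inv_lt_inv₀ (by linarith) h12).mpr h2
    rw [inv_div, inv_neg] at h3
    exact h3
end

section
/- Let f(z) = \sum_{k=0}^\infty a_k z^k, with a_k > 0 for all k, be an entire function. Then the inequality q_n(f) \ge 4 holds for all n \ge 2 if and only if both of the following hold: (i) all zeros of f are real, simple and negative, and (ii) for every pair of integers 0 \le m < n, all zeros of the polynomial \sum_{k=m}^{n} a_k z^k (formed by taking any number of consecutive terms of f) are real and non-positive. -/
open Finset Filter Topology

lemma alt_up (c : ℕ → ℝ) (h0 : 0 < c 0) (m : ℕ) (h : ∀ i < m, c i < c (i+1)) :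
    0 < (-1:ℝ)^m * ∑ i ∈ range (m+1), (-1:ℝ)^i * c i ∧
      (-1:ℝ)^m * ∑ i ∈ range (m+1), (-1:ℝ)^i * c i ≤ c m := by
  induction m with
  | zero => simpa using h0
  | succ m ih =>
    obtain ⟨h1, h2⟩ := ih (fun i hi => h i (by omega))
    have h3 := h m (by omega)
    rw [sum_range_succ]
    have e : (-1:ℝ)^(m+1) * (∑ i ∈ range (m+1), (-1:ℝ)^i * c i + (-1:ℝ)^(m+1) * c (m+1))
        = c (m+1) - (-1:ℝ)^m * ∑ i ∈ range (m+1), (-1:ℝ)^i * c i := by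
      have : (-1:ℝ)^(m+1) * (-1:ℝ)^(m+1) = 1 := by rw [← mul_pow]; simp
      rw [mul_add, ← mul_assoc, this, pow_succ]; ring
    rw [e]
    constructor <;> linarith

lemma alt_down (M : ℕ) : ∀ (d : ℕ → ℝ), (∀ i, 0 < d i) → (∀ i, d (i+1) < d i) →
    0 ≤ ∑ i ∈ range M, (-1:ℝ)^i * d i ∧ ∑ i ∈ range M, (-1:ℝ)^i * d i ≤ d 0 := by
  induction M with
  | zero => intro d h0 _; simpa using (h0 0).le
  | succ M ih =>
    intro d h0 h
    obtain ⟨h1, h2⟩ := ih (fun i => d (i+1)) (fun i => h0 _) (fun i => h _)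
    rw [sum_range_succ']
    have e : ∑ i ∈ range M, (-1:ℝ)^(i+1) * d (i+1) = - ∑ i ∈ range M, (-1:ℝ)^i * d (i+1) := by
      rw [← sum_neg_distrib]; exact sum_congr rfl (fun i _ => by ring)
    rw [e]
    have := h 0
    simp only [pow_zero, one_mul, zero_add] at *
    constructor <;> linarith

lemma alt_down' (M : ℕ) (d : ℕ → ℝ) (h0 : ∀ i, 0 < d i) (h : ∀ i, d (i+1) < d i) :
    d 0 - d 1 ≤ ∑ i ∈ range (M+1), (-1:ℝ)^i * d i := by
  obtain ⟨h1, h2⟩ := alt_down M (fun i => d (i+1)) (fun i => h0 _) (fun i => h _)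
  rw [sum_range_succ']
  have e : ∑ i ∈ range M, (-1:ℝ)^(i+1) * d (i+1) = - ∑ i ∈ range M, (-1:ℝ)^i * d (i+1) := by
    rw [← sum_neg_distrib]; exact sum_congr rfl (fun i _ => by ring)
  rw [e]
  simp only [pow_zero, one_mul, zero_add] at *
  linarith

lemma alt_split (c : ℕ → ℝ) (k M : ℕ) :
    (-1:ℝ)^(k+1) * ∑ i ∈ range (k+2+M+1), (-1:ℝ)^i * c i =
      (-1:ℝ)^(k+1) * ∑ i ∈ range k, (-1:ℝ)^i * c i + (c (k+1) - c k - c (k+2))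
        + ∑ i ∈ range M, (-1:ℝ)^i * c (k+3+i) := by
  have : (-1:ℝ)^k * (-1:ℝ)^k = 1 := by rw [← mul_pow]; simp
  rw [show k+2+M+1 = k+1+1+1+M by ring, sum_range_add, sum_range_succ, sum_range_succ,
    sum_range_succ]
  have e : ∑ i ∈ range M, (-1:ℝ)^(k+1+1+1+i) * c (k+1+1+1+i)
      = (-1:ℝ)^(k+1) * ∑ i ∈ range M, (-1:ℝ)^i * c (k+3+i) := by
    rw [mul_sum]; exact sum_congr rfl (fun i _ => by ring_nf)
  rw [e]
  simp only [pow_succ]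
  linear_combination ((c (k+1) - c k - c (k+2)) + ∑ i ∈ range M, (-1:ℝ)^i * c (k+3+i)) * this

lemma low_nonneg (c : ℕ → ℝ) (h0 : 0 < c 0) (k : ℕ) (h : ∀ i < k, c i < c (i+1)) :
    0 ≤ (-1:ℝ)^(k+1) * ∑ i ∈ range k, (-1:ℝ)^i * c i ∧
    (0 < k → 0 < (-1:ℝ)^(k+1) * ∑ i ∈ range k, (-1:ℝ)^i * c i) := by
  cases k with
  | zero => simp
  | succ k =>
    have := (alt_up c h0 k (fun i hi => h i (by omega))).1
    have e : (-1:ℝ)^(k+1+1) = (-1)^k := by ring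
    rw [e]
    exact ⟨this.le, fun _ => this⟩

/-- sign-change points -/
noncomputable def yy (b : ℕ → ℝ) : ℕ → ℝ
  | 0 => 0
  | k+1 => Real.sqrt (b k / b (k+2))

lemma sum_eq (b : ℕ → ℝ) (n : ℕ) (t : ℝ) : ∑ i ∈ range n, b i * (-t)^i
    = ∑ i ∈ range n, (-1:ℝ)^i * (b i * t^i) := by
  refine sum_congr rfl (fun i _ => ?_)
  rw [neg_pow]; ring

section
variable {b : ℕ → ℝ} (hb : ∀ k, 0 < b k) (hq : ∀ k, 4 * (b k * b (k+2)) ≤ b (k+1)^2)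
include hb

lemma yy_pos (k : ℕ) : 0 < yy b (k+1) := Real.sqrt_pos.2 (div_pos (hb _) (hb _))

lemma yy_sq (k : ℕ) : b (k+2) * yy b (k+1)^2 = b k := by
  have := (hb (k+2)).ne'
  rw [yy, Real.sq_sqrt (div_pos (hb _) (hb _)).le]; field_simp

include hq

lemma yy_mid (k : ℕ) : 2 * b k ≤ b (k+1) * yy b (k+1) := by
  have h1 := yy_sq hb k
  have h2 := yy_pos hb k
  have := hb k
  have := hb (k+1)
  refine (sq_le_sq₀ (by positivity) (by positivity)).1 ?_
  have h3 := mul_le_mul_of_nonneg_right (hq k) (sq_nonneg (yy b (k+1)))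
  nlinarith

lemma yy_mid' (k : ℕ) : 2 * (b (k+2) * yy b (k+1)) ≤ b (k+1) := by
  have h1 := yy_sq hb k
  have h2 := yy_pos hb k
  have h3 := yy_mid hb hq k
  refine le_of_mul_le_mul_right ?_ h2
  nlinarith

lemma yy_down (k i : ℕ) : b (k+1+i+1) * yy b (k+1) < b (k+1+i) := by
  have h2 := yy_pos hb k
  induction i with
  | zero =>
    have := yy_mid' hb hq k
    have := mul_pos (hb (k+2)) h2
    simp only [add_zero]
    linarith
  | succ i ih =>
    have h3 := hq (k+1+i)
    have h4 := hb (k+1+i)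
    have h5 := hb (k+1+i+1)
    have h6 := hb (k+1+i+2)
    refine lt_of_mul_lt_mul_right (a := b (k+1+i)) ?_ h4.le
    have h7 := mul_lt_mul_of_pos_left ih h5
    have h8 := mul_le_mul_of_nonneg_right h3 h2.le
    have h9 : 0 < b (k+1+i) * b (k+1+i+2) * yy b (k+1) := by positivity
    change b (k+1+i+2) * yy b (k+1) * b (k+1+i) < b (k+1+i+1) * b (k+1+i)
    nlinarith

lemma yy_up (k j i : ℕ) (hij : i + j = k) : b i < b (i+1) * yy b (k+1) := by
  have h2 := yy_pos hb k
  induction j generalizing i with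
  | zero =>
    obtain rfl : i = k := by omega
    have := yy_mid hb hq i
    have := hb i
    linarith
  | succ j ih =>
    have h0 := ih (i+1) (by omega)
    have h3 := hq i
    have h4 := hb i
    have h5 := hb (i+1)
    have h6 := hb (i+2)
    refine lt_of_mul_lt_mul_right (a := b (i+2)) ?_ h6.le
    have h7 := mul_lt_mul_of_pos_left h0 h5
    have h9 : 0 < b i * b (i+2) := by positivity
    change b i * b (i+2) < b (i+1) * yy b (k+1) * b (i+2)
    change b (i+1) * b (i+1) < b (i+1) * (b (i+2) * yy b (k+1)) at h7
    nlinarith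

lemma yy_four (k : ℕ) : 4 * yy b (k+1) ≤ yy b (k+2) := by
  have h1 := yy_mid' hb hq k
  have h2 := yy_mid hb hq (k+1)
  refine le_of_mul_le_mul_left ?_ (hb (k+2))
  change 2 * b (k+1) ≤ b (k+2) * yy b (k+2) at h2
  linarith

lemma yy_mono : StrictMono (yy b) := by
  refine strictMono_nat_of_lt_succ (fun n => ?_)
  cases n with
  | zero => exact yy_pos hb 0
  | succ n =>
    have := yy_four hb hq n
    have := yy_pos hb n
    change yy b (n+1) < yy b (n+2)
    linarith

lemma yy_growth (k : ℕ) : 4^k * yy b 1 ≤ yy b (k+1) := by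
  induction k with
  | zero => simp
  | succ n ih =>
    have := yy_four hb hq n
    change _ ≤ yy b (n+2)
    rw [pow_succ]; linarith

lemma terms (k : ℕ) : (∀ i, 0 < b i * yy b (k+1)^i) ∧
    (∀ i < k+1, b i * yy b (k+1)^i < b (i+1) * yy b (k+1)^(i+1)) ∧
    (∀ i, b (k+1+i+1) * yy b (k+1)^(k+1+i+1) < b (k+1+i) * yy b (k+1)^(k+1+i)) ∧
    b k * yy b (k+1)^k + b (k+2) * yy b (k+1)^(k+2) ≤ b (k+1) * yy b (k+1)^(k+1) := by
  have h2 := yy_pos hb k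
  refine ⟨fun i => mul_pos (hb i) (by positivity), fun i hi => ?_, fun i => ?_, ?_⟩
  · have := mul_lt_mul_of_pos_right (yy_up hb hq k (k-i) i (by omega)) (pow_pos h2 i)
    rw [pow_succ]; linarith
  · have := mul_lt_mul_of_pos_right (yy_down hb hq k i) (pow_pos h2 (k+1+i))
    rw [pow_succ _ (k+1+i)]; linarith
  · have h3 := mul_le_mul_of_nonneg_right (yy_mid hb hq k) (pow_pos h2 k).le
    have h4 := yy_sq hb k
    rw [pow_add _ k 2, pow_add _ k 1, pow_one]
    have : b (k+2) * (yy b (k+1)^k * yy b (k+1)^2) = b k * yy b (k+1)^k := by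
      rw [← h4]; ring
    rw [this]; linarith

lemma sign_unif (k : ℕ) : ∃ e > 0, ∀ N, k + 3 ≤ N →
    e ≤ (-1:ℝ)^(k+1) * ∑ i ∈ range (N+1), b i * (-yy b (k+1))^i := by
  obtain ⟨h1, h2, h3, h4⟩ := terms hb hq k
  refine ⟨_, sub_pos.2 (h3 2), fun N hN => ?_⟩
  obtain ⟨M, rfl⟩ : ∃ M, N = k+2+(M+1) := ⟨N-k-3, by omega⟩
  rw [sum_eq]
  have := alt_split (fun i => b i * yy b (k+1)^i) k (M+1)
  rw [this]
  have l1 := (low_nonneg (fun i => b i * yy b (k+1)^i) (h1 0) k (fun i hi => h2 i (by omega))).1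
  have l2 := alt_down' M (fun i => b (k+3+i) * yy b (k+1)^(k+3+i)) (fun i => h1 _)
    (fun i => by have := h3 (i+2); rw [show k+1+(i+2) = k+3+i by ring] at this; exact this)
  have e : k+1+2 = k+3+0 := rfl
  have e' : k+1+2+1 = k+3+1 := rfl
  rw [e', e]
  linarith

lemma sign_N (N k : ℕ) (hk : k < N) (hN : N ≠ 2) :
    0 < (-1:ℝ)^(k+1) * ∑ i ∈ range (N+1), b i * (-yy b (k+1))^i := by
  obtain ⟨h1, h2, h3, h4⟩ := terms hb hq k
  rcases lt_or_ge N (k+3) with h | h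
  · rw [sum_eq]
    obtain rfl | rfl : N = k+1 ∨ N = k+2 := by omega
    · exact (alt_up (fun i => b i * yy b (k+1)^i) (h1 0) (k+1) h2).1
    · have := alt_split (fun i => b i * yy b (k+1)^i) k 0
      rw [add_zero] at this
      rw [this]
      have l1 := (low_nonneg (fun i => b i * yy b (k+1)^i) (h1 0) k
        (fun i hi => h2 i (by omega))).2 (by omega)
      simp only [range_zero, sum_empty, add_zero] at *
      linarith
  · obtain ⟨e, he, h⟩ := sign_unif hb hq k
    exact he.trans_le (h N ‹_›)

lemma sign_y (N k : ℕ) (hk : k ≤ N) (hN : N ≠ 2) :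
    0 < (-1:ℝ)^k * ∑ i ∈ range (N+1), b i * (-yy b k)^i := by
  cases k with
  | zero =>
    rw [sum_range_succ']
    simpa [yy] using hb 0
  | succ k => exact sign_N hb hq N k (by omega) hN

lemma roots_exist (N : ℕ) (hN : N ≠ 2) : ∃ r : ℕ → ℝ,
    (∀ j < N, yy b j < r j ∧ r j < yy b (j+1)) ∧
    ∀ z : ℂ, ∑ i ∈ range (N+1), (b i : ℂ) * z^i = b 0 * ∏ j ∈ range N, (1 + z / r j) := by
  have hex : ∀ j, ∃ t, j < N → (yy b j < t ∧ t < yy b (j+1)) ∧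
      ∑ i ∈ range (N+1), b i * (-t)^i = 0 := by
    intro j
    by_cases hj : j < N
    swap
    · exact ⟨0, fun h => absurd h hj⟩
    have s1 := sign_y hb hq N j hj.le hN
    have s2 := sign_y hb hq N (j+1) hj hN
    have hc : ContinuousOn (fun t : ℝ => (-1:ℝ)^j * ∑ i ∈ range (N+1), b i * (-t)^i)
      (Set.Icc (yy b j) (yy b (j+1))) := by fun_prop
    have := intermediate_value_Ioo' (yy_mono hb hq (Nat.lt_succ_self j)).le hc
    obtain ⟨t, ht, h0⟩ := this (show (0:ℝ) ∈ _ from ⟨by rw [pow_succ] at s2; linarith, s1⟩)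
    refine ⟨t, fun _ => ⟨ht, ?_⟩⟩
    simpa using h0
  choose r hr using hex
  refine ⟨r, fun j hj => (hr j hj).1, ?_⟩
  have hpos : ∀ j < N, 0 < r j := fun j hj =>
    lt_of_le_of_lt ((yy_mono hb hq).monotone (Nat.zero_le j)) (hr j hj).1.1
  have hlt : ∀ i j, i < j → j < N → r i < r j := fun i j hij hj =>
    ((hr i (by omega)).1.2.trans_le ((yy_mono hb hq).monotone hij)).trans (hr j hj).1.1
  let P : Polynomial ℂ := ∑ i ∈ range (N+1), Polynomial.C (b i : ℂ) * Polynomial.X^i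
  let Q : Polynomial ℂ := Polynomial.C (b 0 : ℂ) *
    ∏ j ∈ range N, (1 + Polynomial.C ((r j : ℂ)⁻¹) * Polynomial.X)
  have hPe : ∀ z, P.eval z = ∑ i ∈ range (N+1), (b i : ℂ) * z^i := by
    intro z; simp [P, Polynomial.eval_finsetSum]
  have hQe : ∀ z, Q.eval z = b 0 * ∏ j ∈ range N, (1 + z / r j) := by
    intro z; simp [Q, Polynomial.eval_prod, div_eq_inv_mul]
  have key : P = Q := by
    refine Polynomial.eq_of_degrees_lt_of_eval_index_eq (range (N+1))
      (v := fun i : ℕ => if i = 0 then (0:ℂ) else -((r (i-1) : ℝ) : ℂ)) ?_ ?_ ?_ ?_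
    · intro i hi j hj hij
      simp only [coe_range, Set.mem_Iio] at hi hj
      by_contra hne
      rcases Nat.eq_zero_or_pos i with h | h <;> rcases Nat.eq_zero_or_pos j with h' | h'
      · omega
      · have := (hpos (j-1) (by omega)).ne'
        simp [h, h'.ne'] at hij
        exact this hij
      · have := (hpos (i-1) (by omega)).ne'
        simp [h', h.ne'] at hij
        exact this hij
      · simp [h.ne', h'.ne'] at hij
        rcases lt_or_gt_of_ne hne with h1 | h1
        · exact (hlt (i-1) (j-1) (by omega) (by omega)).ne hij
        · exact (hlt (j-1) (i-1) (by omega) (by omega)).ne' hij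
    · rw [card_range]
      refine lt_of_le_of_lt (b := (N : WithBot ℕ)) ?_ (by exact_mod_cast Nat.lt_succ_self N)
      refine (Polynomial.degree_sum_le _ _).trans (Finset.sup_le fun i hi => ?_)
      refine (Polynomial.degree_C_mul_X_pow_le _ _).trans ?_
      have := mem_range.1 hi
      exact_mod_cast Nat.lt_succ_iff.1 this
    · rw [card_range]
      refine lt_of_le_of_lt (b := (N : WithBot ℕ)) ?_ (by exact_mod_cast Nat.lt_succ_self N)
      refine Polynomial.natDegree_le_iff_degree_le.1 ?_
      refine (Polynomial.natDegree_C_mul_le _ _).trans ?_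
      refine (Polynomial.natDegree_prod_le _ _).trans ?_
      refine (Finset.sum_le_card_nsmul _ _ 1 (fun i _ => ?_)).trans (by simp)
      compute_degree
    · intro i hi
      rw [hPe, hQe]
      have hi := mem_range.1 hi
      cases i with
      | zero => 
        rw [sum_range_succ']
        simp
      | succ i =>
        have h0 := (hr i (by omega)).2
        have hp := (hpos i (by omega)).ne'
        have e1 : ∑ k ∈ range (N+1), (b k : ℂ) * (-((r i : ℝ):ℂ))^k = 0 := by
          exact_mod_cast congrArg (fun t : ℝ => (t : ℂ)) h0
        have e2 : ∏ j ∈ range N, (1 + (-((r i : ℝ):ℂ)) / r j) = 0 := by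
          refine prod_eq_zero (mem_range.2 (show i < N by omega)) ?_
          have : ((r i : ℝ):ℂ) ≠ 0 := by exact_mod_cast hp
          rw [neg_div, div_self this]; ring
        simp only [Nat.succ_ne_zero, if_false, Nat.add_sub_cancel]
        rw [e1, e2, mul_zero]
  intro z
  rw [← hPe, ← hQe, key]

end

lemma prod_one_sub_ge (t : Finset ℕ) (u : ℕ → ℝ) (h0 : ∀ i ∈ t, 0 ≤ u i)
    (h1 : ∀ i ∈ t, u i ≤ 1) : 1 - ∑ i ∈ t, u i ≤ ∏ i ∈ t, (1 - u i) ∧ ∏ i ∈ t, (1 - u i) ≤ 1 := by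
  classical
  induction t using Finset.induction_on with
  | empty => simp
  | insert a s ha ih =>
    obtain ⟨i1, i2⟩ := ih (fun i hi => h0 i (mem_insert_of_mem hi))
      (fun i hi => h1 i (mem_insert_of_mem hi))
    have p : 0 ≤ ∏ i ∈ s, (1 - u i) :=
      prod_nonneg (fun i hi => sub_nonneg.2 (h1 i (mem_insert_of_mem hi)))
    have a0 := h0 a (mem_insert_self _ _)
    have a1 := h1 a (mem_insert_self _ _)
    rw [sum_insert ha, prod_insert ha]
    constructor <;> nlinarith

lemma lower_bound (u : ℕ → ℝ) (hu : Summable u) (hu0 : ∀ i, 0 ≤ u i) (δ : ℝ) (hδ : 0 < δ)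
    (hδ1 : δ ≤ 1) : ∃ c > 0, ∀ (s : Finset ℕ) (g : ℕ → ℝ), (∀ j ∈ s, δ ≤ g j) →
      (∀ j ∈ s, 1 - u j ≤ g j) → c ≤ ∏ j ∈ s, g j := by
  classical
  obtain ⟨F, hF⟩ := summable_iff_vanishing_norm.1 hu (1/2) (by norm_num)
  have hF' : ∀ t, Disjoint t F → ∑ i ∈ t, u i < 1/2 := fun t ht =>
    (le_abs_self _).trans_lt (hF t ht)
  refine ⟨δ^(#F) * (1/2), by positivity, fun s g h1 h2 => ?_⟩
  rw [← prod_inter_mul_prod_sdiff s F g]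
  have a1 : δ^(#F) ≤ ∏ j ∈ s ∩ F, g j := by
    calc δ^(#F) ≤ δ^(#(s ∩ F)) := pow_le_pow_of_le_one hδ.le hδ1 (card_le_card inter_subset_right)
      _ = ∏ j ∈ s ∩ F, δ := by simp
      _ ≤ _ := prod_le_prod (fun _ _ => hδ.le) (fun i hi => h1 i (mem_inter.1 hi).1)
  have hle : ∀ i ∈ s \ F, u i ≤ 1 := by
    intro i hi
    have := hF' {i} (by simpa using (mem_sdiff.1 hi).2)
    simp at this
    linarith
  have a2 : (1/2:ℝ) ≤ ∏ j ∈ s \ F, g j := by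
    have := hF' (s \ F) sdiff_disjoint
    have h3 := (prod_one_sub_ge (s \ F) u (fun i _ => hu0 i) hle).1
    have h4 : ∏ i ∈ s \ F, (1 - u i) ≤ ∏ j ∈ s \ F, g j :=
      prod_le_prod (fun i hi => sub_nonneg.2 (hle i hi)) (fun i hi => h2 i (mem_sdiff.1 hi).1)
    linarith
  exact mul_le_mul a1 a2 (by norm_num) ((pow_nonneg hδ.le _).trans a1)

section
variable {b : ℕ → ℝ} (hb : ∀ k, 0 < b k) (hq : ∀ k, 4 * (b k * b (k+2)) ≤ b (k+1)^2)
include hb hq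

lemma factor_tail (B : ℝ) (hB : 0 ≤ B) (z : ℂ) (hz : ‖z‖ ≤ B) (j : ℕ) (r : ℝ) (hr : yy b j < r) :
    1 - (1 + 4 * B / yy b 1) * (1/4)^j ≤ ‖1 + z / r‖ := by
  have hy := yy_pos hb 0
  simp only [zero_add] at hy
  cases j with
  | zero =>
    have : 0 ≤ 4 * B / yy b 1 := by positivity
    have := norm_nonneg (1 + z / r)
    simp; linarith
  | succ k =>
    have g := yy_growth hb hq k
    have rp : 0 < r := (yy_pos hb k).trans hr
    have h1 : ‖z / (r:ℂ)‖ ≤ 4 * B / yy b 1 * (1/4)^(k+1) := by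
      rw [norm_div, Complex.norm_real, Real.norm_of_nonneg rp.le, div_le_iff₀ rp]
      have h4 : (0:ℝ) < 4^k := by positivity
      calc ‖z‖ ≤ B := hz
        _ = 4 * B / yy b 1 * (1/4)^(k+1) * (4^k * yy b 1) := by
          rw [pow_succ, one_div, inv_pow]; field_simp
        _ ≤ _ := by
          refine mul_le_mul_of_nonneg_left (g.trans hr.le) (by positivity)
    have h2 : 1 - ‖z / (r:ℂ)‖ ≤ ‖1 + z / r‖ := by
      have := norm_sub_le (1 + z / (r:ℂ)) (z / r)
      simp at this
      simp
      linarith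
    have : (0:ℝ) ≤ (1/4)^(k+1) := by positivity
    nlinarith

lemma summ_u (C : ℝ) : Summable (fun j : ℕ => C * (1/4:ℝ)^j) :=
  (summable_geometric_of_lt_one (by norm_num) (by norm_num)).mul_left C

lemma u_nonneg (B : ℝ) (hB : 0 ≤ B) (j : ℕ) : 0 ≤ (1 + 4 * B / yy b 1) * (1/4)^j := by
  have hy := yy_pos hb 0
  simp only [zero_add] at hy
  positivity

variable {f : ℂ → ℂ} (hf : ∀ z : ℂ, HasSum (fun k : ℕ => (b k : ℂ) * z ^ k) (f z))
include hf

omit hb hq in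
lemma tends (z : ℂ) : Tendsto (fun N => ∑ i ∈ range (N+1), (b i : ℂ) * z^i) atTop (𝓝 (f z)) :=
  ((hf z).tendsto_sum_nat).comp (tendsto_add_atTop_nat 1)

lemma zero_im (z : ℂ) (h0 : f z = 0) : z.im = 0 := by
  by_contra him
  have hzn : 0 < ‖z‖ := norm_pos_iff.2 (fun h => him (by simp [h]))
  obtain ⟨c, hc, H⟩ := lower_bound _ (summ_u hb hq (1 + 4 * ‖z‖ / yy b 1))
    (u_nonneg hb hq ‖z‖ hzn.le) (|z.im| / ‖z‖) (by positivity)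
    ((div_le_one hzn).2 (Complex.abs_im_le_norm z))
  have ht := (tends hf z).norm
  have : b 0 * c ≤ ‖f z‖ := by
    refine ge_of_tendsto ht ?_
    filter_upwards [eventually_ge_atTop 3] with N hN
    obtain ⟨r, hr, hS⟩ := roots_exist hb hq N (by omega)
    rw [hS, norm_mul, Complex.norm_real, Real.norm_of_nonneg (hb 0).le, norm_prod]
    refine mul_le_mul_of_nonneg_left (H _ _ (fun j hj => ?_) (fun j hj => ?_)) (hb 0).le
    · rw [div_le_iff₀ hzn, ← Complex.norm_conj z, ← norm_mul]
      refine le_trans ?_ (Complex.abs_im_le_norm _)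
      have : (1 + z / (r j:ℂ)) * (starRingEnd ℂ) z
          = (starRingEnd ℂ) z + ((Complex.normSq z / r j : ℝ) : ℂ) := by
        rw [add_mul, one_mul, div_mul_eq_mul_div, Complex.mul_conj]; push_cast; rfl
      rw [this]
      simp only [Complex.add_im, Complex.conj_im, Complex.ofReal_im, add_zero, abs_neg, le_refl]
    · exact factor_tail hb hq _ hzn.le z le_rfl j _ (hr j (mem_range.1 hj)).1
  rw [h0, norm_zero] at this
  have := mul_pos (hb 0) hc
  linarith

lemma f_diff : Differentiable ℂ f := by
  intro z
  have hR : ∀ w ∈ Metric.ball (0:ℂ) (‖z‖+1), ‖w‖ ≤ ‖z‖+1 := fun w hw => by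
    simpa using (Metric.mem_ball.1 hw).le
  have hs : Summable (fun k => ‖(b k : ℂ) * (((‖z‖+1 : ℝ)):ℂ)^k‖) := (hf _).summable.norm
  have := Complex.differentiableOn_tsum_of_summable_norm (F := fun k w => (b k : ℂ) * w^k)
    (U := Metric.ball (0:ℂ) (‖z‖+1)) hs (fun i => by fun_prop) Metric.isOpen_ball
    (fun i w hw => by
      rw [norm_mul, norm_mul, norm_pow, norm_pow, Complex.norm_real (‖z‖+1),
        Real.norm_of_nonneg (by positivity : 0 ≤ ‖z‖+1)]
      have := hR w hw
      gcongr)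
  have e : (fun w => ∑' k, (b k : ℂ) * w^k) = f := funext fun w => (hf w).tsum_eq
  rw [e] at this
  exact this.differentiableAt (Metric.isOpen_ball.mem_nhds (by simp))

lemma f_nonneg_ne (x : ℝ) (hx : 0 ≤ x) : f x ≠ 0 := by
  intro h0
  have ht := (Complex.continuous_re.tendsto _).comp (tends hf x)
  have : b 0 ≤ (f x).re := by
    refine ge_of_tendsto ht (Eventually.of_forall fun N => ?_)
    have e : ∑ i ∈ range (N+1), (b i : ℂ) * (x:ℂ)^i
        = ((∑ i ∈ range (N+1), b i * x^i : ℝ) : ℂ) := by push_cast; rfl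
    simp only [Function.comp_apply]
    rw [e, Complex.ofReal_re, sum_range_succ']
    have : 0 ≤ ∑ i ∈ range N, b (i+1) * x^(i+1) :=
      sum_nonneg fun i _ => mul_nonneg (hb _).le (by positivity)
    simp; linarith
  rw [h0] at this
  have := hb 0
  simp at *
  linarith

lemma f_yy_ne (k : ℕ) : f (-(yy b k : ℂ)) ≠ 0 := by
  intro h0
  cases k with
  | zero => exact f_nonneg_ne hb hq hf 0 le_rfl (by simpa [yy] using h0)
  | succ k =>
    obtain ⟨e, he, h⟩ := sign_unif hb hq k
    have ht := (tends hf (-(yy b (k+1) : ℂ))).norm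
    have : e ≤ ‖f (-(yy b (k+1) : ℂ))‖ := by
      refine ge_of_tendsto ht ?_
      filter_upwards [eventually_ge_atTop (k+3)] with N hN
      have e : ∑ i ∈ range (N+1), (b i : ℂ) * (-(yy b (k+1) : ℂ))^i
        = ((∑ i ∈ range (N+1), b i * (-yy b (k+1))^i : ℝ) : ℂ) := by push_cast; rfl
      rw [e, Complex.norm_real]
      refine (h N hN).trans ((le_abs_self _).trans ?_)
      rw [abs_mul, abs_pow]; simp
    rw [h0, norm_zero] at this
    linarith

lemma exists_interval (y : ℝ) (hy : 0 < y) (h0 : f (-(y:ℂ)) = 0) :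
    ∃ j, yy b j < y ∧ y < yy b (j+1) := by
  have hex : ∃ n, y < yy b n := by
    have hp := yy_pos hb 0
    simp only [zero_add] at hp
    obtain ⟨n, hn⟩ := pow_unbounded_of_one_lt (y / yy b 1) (by norm_num : (1:ℝ) < 4)
    exact ⟨n+1, ((div_lt_iff₀ hp).1 hn).trans_le (yy_growth hb hq n)⟩
  classical
  have h1 := Nat.find_spec hex
  have h2 : Nat.find hex ≠ 0 := by
    intro h; rw [h] at h1; simp [yy] at h1; linarith
  obtain ⟨j, hj⟩ := Nat.exists_eq_succ_of_ne_zero h2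
  refine ⟨j, lt_of_le_of_ne ?_ ?_, by rw [hj] at h1; exact h1⟩
  · exact not_lt.1 (Nat.find_min hex (by omega : j < Nat.find hex))
  · rintro rfl
    exact f_yy_ne hb hq hf j h0

lemma local_bound (y : ℝ) (hy : 0 < y) (h0 : f (-(y:ℂ)) = 0) :
    ∃ α β c : ℝ, α < y ∧ y < β ∧ 0 < c ∧ ∀ w, α ≤ w → w ≤ β → c * |y - w| ≤ ‖f (-(w:ℂ))‖ := by
  obtain ⟨j, hj1, hj2⟩ := exists_interval hb hq hf y hy h0
  obtain ⟨α, ha1, ha2⟩ := exists_between hj1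
  obtain ⟨β, hb1, hb2⟩ := exists_between hj2
  have mono := (yy_mono hb hq).monotone
  have hyj : 0 ≤ yy b j := mono (Nat.zero_le j)
  have hβ : 0 < β := hy.trans hb1
  have hyj1 : 0 < yy b (j+1) := hβ.trans hb2
  let δ : ℝ := min ((α - yy b j) / β) ((yy b (j+1) - β) / yy b (j+1))
  have hδ : 0 < δ := lt_min (div_pos (by linarith) hβ) (div_pos (by linarith) hyj1)
  have hδ1 : δ ≤ 1 := (min_le_left _ _).trans ((div_le_one hβ).2 (by linarith))
  obtain ⟨c, hc, H⟩ := lower_bound _ (summ_u hb hq (1 + 4 * β / yy b 1))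
    (u_nonneg hb hq β hβ.le) δ hδ hδ1
  have key : ∀ N, 3 ≤ N → j < N → ∃ r : ℝ, 0 < r ∧ ∀ w, α ≤ w → w ≤ β →
      b 0 * c * |1 - w / r| ≤ ‖∑ i ∈ range (N+1), (b i : ℂ) * (-(w:ℂ))^i‖ := by
    intro N hN hjN
    obtain ⟨r, hr, hS⟩ := roots_exist hb hq N (by omega)
    refine ⟨r j, hyj.trans_lt (hr j hjN).1, fun w hw1 hw2 => ?_⟩
    have hw0 : 0 < w := by linarith
    have nn : ∀ i, ‖1 + -(w:ℂ) / (r i : ℂ)‖ = |1 - w / r i| := by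
      intro i
      rw [show 1 + -(w:ℂ) / (r i : ℂ) = ((1 - w / r i : ℝ) : ℂ) by push_cast; ring,
        Complex.norm_real, Real.norm_eq_abs]
    rw [hS, norm_mul, Complex.norm_real, Real.norm_of_nonneg (hb 0).le, norm_prod,
      ← mul_prod_erase _ _ (mem_range.2 hjN), nn j]
    have : c ≤ ∏ i ∈ (range N).erase j, ‖1 + -(w:ℂ) / (r i : ℂ)‖ := by
      refine H _ _ (fun i hi => ?_) (fun i hi => ?_)
      · obtain ⟨hne, hi⟩ := mem_erase.1 hi
        obtain ⟨r1, r2⟩ := hr i (mem_range.1 hi)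
        have rp : 0 < r i := lt_of_le_of_lt (mono (Nat.zero_le i)) r1
        rw [nn]
        rcases lt_or_gt_of_ne hne with h | h
        · have l1 : r i ≤ yy b j := r2.le.trans (mono h)
          refine (min_le_left _ _).trans ?_
          rw [abs_sub_comm]
          refine le_trans ?_ (le_abs_self _)
          have : (w / r i - 1) = (w - r i) / r i := by field_simp
          rw [this, div_le_div_iff₀ hβ rp]
          have : (α - yy b j) * r i ≤ (α - yy b j) * β :=
            mul_le_mul_of_nonneg_left (by linarith) (by linarith)
          have : (α - yy b j) * β ≤ (w - r i) * β :=
            mul_le_mul_of_nonneg_right (by linarith) hβ.le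
          linarith
        · have l1 : yy b (j+1) ≤ r i := (mono h).trans r1.le
          refine (min_le_right _ _).trans ?_
          refine le_trans ?_ (le_abs_self _)
          have : (1 - w / r i) = (r i - w) / r i := by field_simp
          rw [this, div_le_div_iff₀ hyj1 rp]
          nlinarith
      · have := hr i (mem_range.1 (mem_erase.1 hi).2)
        refine factor_tail hb hq _ hβ.le _ ?_ i _ this.1
        rw [norm_neg, Complex.norm_real, Real.norm_of_nonneg hw0.le]; exact hw2
    have h5 := mul_le_mul_of_nonneg_left this (mul_nonneg (hb 0).le (abs_nonneg (1 - w / r j)))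
    linarith
  choose! r hr hS using key
  have hbc : 0 < b 0 * c := mul_pos (hb 0) hc
  have ev : ∀ᶠ N : ℕ in atTop, 3 ≤ N ∧ j < N :=
    (eventually_ge_atTop 3).and (eventually_gt_atTop j)
  have lim1 : Tendsto (fun N => 1 - y / r N) atTop (𝓝 0) := by
    have ht := ((tends hf (-(y:ℂ))).norm).const_mul (b 0 * c)⁻¹
    rw [h0, norm_zero, mul_zero] at ht
    refine squeeze_zero_norm' ?_ ht
    filter_upwards [ev] with N hN
    have := hS N hN.1 hN.2 y ha2.le hb1.le
    rw [Real.norm_eq_abs, le_inv_mul_iff₀ hbc]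
    exact this
  refine ⟨α, β, b 0 * c / y, ha2, hb1, div_pos hbc hy, fun w hw1 hw2 => ?_⟩
  have lim2 : Tendsto (fun N => b 0 * c * |1 - w / r N|) atTop (𝓝 (b 0 * c / y * |y - w|)) := by
    have h1 := (((lim1.const_sub 1).const_mul (w / y)).const_sub 1).abs.const_mul (b 0 * c)
    have e : b 0 * c * |1 - w / y * (1 - 0)| = b 0 * c / y * |y - w| := by
      have : 1 - w / y * (1 - 0) = (y - w) / y := by field_simp; ring
      rw [this, abs_div, abs_of_pos hy]; ring
    rw [e] at h1
    refine h1.congr (fun N => ?_)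
    have : w / y * (1 - (1 - y / r N)) = w / r N := by field_simp; ring
    rw [this]
  refine le_of_tendsto_of_tendsto lim2 (tends hf _).norm ?_
  filter_upwards [ev] with N hN
  exact hS N hN.1 hN.2 w hw1 hw2

lemma deriv_ne (y : ℝ) (hy : 0 < y) (h0 : f (-(y:ℂ)) = 0) : deriv f (-(y:ℂ)) ≠ 0 := by
  intro hd
  obtain ⟨α, β, c, h1, h2, hc, H⟩ := local_bound hb hq hf y hy h0
  have hda := (f_diff hb hq hf (-(y:ℂ))).hasDerivAt
  rw [hd, hasDerivAt_iff_isLittleO] at hda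
  have := hda.def (half_pos hc)
  have hcont : Tendsto (fun w : ℝ => -(w:ℂ)) (𝓝[≠] y) (𝓝 (-(y:ℂ))) :=
    ((by fun_prop : Continuous (fun w : ℝ => -(w:ℂ))).tendsto y).mono_left nhdsWithin_le_nhds
  have h3 := hcont.eventually this
  have h4 : ∀ᶠ w in 𝓝[≠] y, w ∈ Set.Ioo α β :=
    nhdsWithin_le_nhds (Ioo_mem_nhds h1 h2)
  have h5 : ∀ᶠ w in 𝓝[≠] y, w ≠ y := self_mem_nhdsWithin
  obtain ⟨w, h3, h4, h5⟩ := (h3.and (h4.and h5)).exists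
  have h6 := H w h4.1.le h4.2.le
  have e : -(w:ℂ) - -(y:ℂ) = ((y - w : ℝ) : ℂ) := by push_cast; ring
  rw [h0, e, Complex.norm_real, Real.norm_eq_abs] at h3
  simp only [sub_zero, smul_zero] at h3
  have : 0 < |y - w| := abs_pos.2 (sub_ne_zero.2 (Ne.symm h5))
  have := mul_pos hc this
  linarith

end

lemma quad_zero {p q r : ℝ} (hp : 0 < p) (hq : 0 < q) (hr : 0 < r) (hd : 4 * (p * r) ≤ q^2)
    (z : ℂ) (hz : (p:ℂ) + q * z + r * z^2 = 0) : z.im = 0 ∧ z.re ≤ 0 := by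
  have h1 := congrArg Complex.re hz
  have h2 := congrArg Complex.im hz
  simp [pow_two] at h1 h2
  have him : z.im = 0 := by
    by_contra him
    have h3 : q + 2 * r * z.re = 0 := by
      refine (mul_eq_zero.1 (show z.im * (q + 2 * r * z.re) = 0 by linarith)).resolve_left him
    have h4 : 0 < r^2 * z.im^2 := by positivity
    have h5 : q = -(2 * r * z.re) := by linarith
    subst h5
    nlinarith
  refine ⟨him, ?_⟩
  by_contra hre
  push Not at hre
  rw [him] at h1
  have : 0 < q * z.re := by positivity
  have : 0 < r * (z.re * z.re) := by positivity
  simp at h1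
  linarith

lemma quad_disc {p q r : ℝ} (hr : 0 < r)
    (h : ∀ z : ℂ, (p:ℂ) + q * z + r * z^2 = 0 → z.im = 0) : 4 * (p * r) ≤ q^2 := by
  by_contra hlt
  push Not at hlt
  have hD : 0 < 4 * (p * r) - q^2 := by linarith
  set s := Real.sqrt (4 * (p * r) - q^2) with hs
  have hsp : 0 < s := Real.sqrt_pos.2 hD
  have hs2 : s^2 = 4 * (p * r) - q^2 := Real.sq_sqrt hD.le
  have := h ⟨-q/(2*r), s/(2*r)⟩ (by
    apply Complex.ext
    · simp [pow_two]; field_simp; nlinarith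
    · simp [pow_two]; field_simp; ring)
  simp at this
  rcases this with h | h <;> linarith

lemma poly_zero {b : ℕ → ℝ} (hb : ∀ k, 0 < b k) (hq : ∀ k, 4 * (b k * b (k+2)) ≤ b (k+1)^2)
    (N : ℕ) (z : ℂ) (hz : ∑ i ∈ range (N+1), (b i : ℂ) * z^i = 0) : z.im = 0 ∧ z.re ≤ 0 := by
  by_cases hN : N = 2
  · subst hN
    refine quad_zero (hb 0) (hb 1) (hb 2) (hq 0) z ?_
    simpa [sum_range_succ] using hz
  · obtain ⟨r, hr, hS⟩ := roots_exist hb hq N hN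
    rw [hS, mul_eq_zero] at hz
    rcases hz with h | h
    · exact absurd h (by exact_mod_cast (hb 0).ne')
    · obtain ⟨j, hj, h⟩ := prod_eq_zero_iff.1 h
      have rp : 0 < r j := lt_of_le_of_lt ((yy_mono hb hq).monotone (Nat.zero_le j))
        (hr j (mem_range.1 hj)).1
      have rp' : (r j : ℂ) ≠ 0 := by exact_mod_cast rp.ne'
      have : z = ((-(r j) : ℝ) : ℂ) := by
        field_simp at h
        push_cast
        linear_combination h
      rw [this]
      simp [rp.le]

theorem stmt6 (a : ℕ → ℝ) (f : ℂ → ℂ)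
    (ha : ∀ k, 0 < a k)
    (hf : ∀ z : ℂ, HasSum (fun k : ℕ => (a k : ℂ) * z ^ k) (f z)) :
    (∀ n : ℕ, 2 ≤ n → 4 ≤ secondQuotient a n) ↔
      ((∀ z : ℂ, f z = 0 → z.im = 0 ∧ z.re < 0 ∧ deriv f z ≠ 0) ∧
        (∀ m n : ℕ, m < n → ∀ z : ℂ,
          (∑ k ∈ Finset.Icc m n, (a k : ℂ) * z ^ k) = 0 → z.im = 0 ∧ z.re ≤ 0)) := by
  have hshift : ∀ m N (z : ℂ), ∑ k ∈ Finset.Icc m (m+N), (a k : ℂ) * z ^ k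
      = z^m * ∑ i ∈ range (N+1), (a (m+i) : ℂ) * z^i := by
    intro m N z
    have : Finset.Icc m (m+N) = Finset.Ico m (m+N+1) := by ext; simp
    rw [this, sum_Ico_eq_sum_range, show m+N+1-m = N+1 by omega, mul_sum]
    exact sum_congr rfl (fun i _ => by rw [pow_add]; ring)
  have hquot : (∀ n : ℕ, 2 ≤ n → 4 ≤ secondQuotient a n) ↔
      ∀ k, 4 * (a k * a (k+2)) ≤ a (k+1)^2 := by
    constructor
    · intro h k
      have := h (k+2) (by omega)
      rw [secondQuotient, show k+2-1 = k+1 by omega, show k+2-2 = k by omega,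
        le_div_iff₀ (mul_pos (ha _) (ha _))] at this
      exact this
    · intro h n hn
      obtain ⟨k, rfl⟩ : ∃ k, n = k+2 := ⟨n-2, by omega⟩
      rw [secondQuotient, show k+2-1 = k+1 by omega, show k+2-2 = k by omega,
        le_div_iff₀ (mul_pos (ha _) (ha _))]
      exact h k
  rw [hquot]
  constructor
  · intro hq
    refine ⟨fun z hz => ?_, fun m n hmn z hz => ?_⟩
    · have him := zero_im ha hq hf z hz
      have hzr : z = (z.re : ℂ) := Complex.ext (by simp) (by simp [him])
      have hre : z.re < 0 := by
        by_contra h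
        rw [hzr] at hz
        exact f_nonneg_ne ha hq hf z.re (not_lt.1 h) hz
      refine ⟨him, hre, ?_⟩
      have e : z = -((-z.re : ℝ) : ℂ) := by rw [hzr]; simp
      rw [e] at hz ⊢
      exact deriv_ne ha hq hf (-z.re) (by linarith) hz
    · obtain ⟨N, rfl⟩ := Nat.exists_eq_add_of_lt hmn
      rw [add_assoc, hshift, mul_eq_zero] at hz
      rcases hz with h | h
      · have := eq_zero_of_pow_eq_zero h
        simp [this]
      · exact poly_zero (b := fun i => a (m+i)) (fun i => ha _) (fun k => hq (m+k)) _ z h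
  · rintro ⟨-, h⟩ k
    refine quad_disc (ha (k+2)) (fun z hz => (h k (k+2) (by omega) z ?_).1)
    rw [hshift]
    simp only [sum_range_succ, range_zero, sum_empty]
    simp only [add_zero, pow_zero, mul_one, zero_add, pow_one]
    rw [hz, mul_zero]
end
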